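/- Let (α_n) and (ε_n) be sequences of reals in (0,1) with α_n/ε_n → ∞ and α_n ε_n^3 (n log n)^{1/2} → ∞, and for each n let G_n be an (α_n, ε_n)-regular graph on n vertices. Then for all sufficiently large n, G_n contains at least (α_n/2 − 4ε_n)n pairwise edge-disjoint Hamilton cycles. -/

import Mathlib

open Finset Filter

open scoped Classical in
/-- A graph `G` on `[n]` is `(α, ε)`-regular: every vertex has degree at least `(α-ε)n`,
and for all disjoint `S, T` with `|S|, |T| ≥ εn`, `|e(S,T)/(|S||T|) - α| ≤ ε`. -/
def IsRegularGraph {n : ℕ} (G : SimpleGraph (Fin n)) (α ε : ℝ) : Prop :=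
  (∀ v : Fin n, (α - ε) * (n : ℝ) ≤ ((Finset.univ.filter fun w => G.Adj v w).card : ℝ)) ∧
  ∀ S T : Finset (Fin n), Disjoint S T → ε * (n : ℝ) ≤ (S.card : ℝ) → ε * (n : ℝ) ≤ (T.card : ℝ) →
    |(((S ×ˢ T).filter fun e => G.Adj e.1 e.2).card : ℝ) / ((S.card : ℝ) * (T.card : ℝ)) - α| ≤ ε

open scoped Classical in
/-- `s` is the edge set of a Hamiltonian cycle of `G`. -/
def IsHamCycleEdgeSet {n : ℕ} (G : SimpleGraph (Fin n)) (s : Finset (Sym2 (Fin n))) : Prop :=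
  ∃ (a : Fin n) (w : G.Walk a a), w.IsHamiltonianCycle ∧ s = w.edges.toFinset

/-!
A sparse random reserve `H ⊆ G` (each edge kept with probability `ε / α`) is put aside; the
remainder `B` inherits the degree and density conditions of `G`. A random equipartition splits the
vertices into `2 * K` blocks of size `m`, with few leftovers, so that the bipartite subgraph of `B`
between any two blocks satisfies the Ore–Ryser condition and hence contains `D` edge-disjoint
perfect matchings. Walecki's zigzags decompose the complete graph on the `2 * K` blocks into `K`
Hamilton paths, and following the matchings along them gives `K * D` edge-disjoint systems of `m`
vertex-disjoint paths of `B` that cover all blocks. The paths of each system, together with the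
leftovers, are concatenated into a cyclic order of the vertices in which few consecutive pairs
fail to be edges of the system. Pósa rotations at both ends remove these pairs one at a time, each
step spending edges of `H` not used so far. The counts are such that `K * D ≥ (α / 2 - 4 * ε) * n`.
-/

namespace HamiltonPacking

open scoped Classical

section Concentration

open MeasureTheory ProbabilityTheory

variable {ι κ J : Type*} [MeasurableSpace κ] (ν : Measure κ) [IsProbabilityMeasure ν]

theorem hasSubgaussianMGF_pi_indicator_sub [Fintype ι] {A : Set κ} (hA : MeasurableSet A) (i : ι) :
    HasSubgaussianMGF (fun f : ι → κ ↦ A.indicator (1 : κ → ℝ) (f i) - ν.real A) (1 / 4)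
      (Measure.pi fun _ : ι ↦ ν) := by
  have hmean : ∫ f : ι → κ, A.indicator (1 : κ → ℝ) (f i) ∂(Measure.pi fun _ : ι ↦ ν) =
      ν.real A := by
    rw [integral_comp_eval (μ := fun _ : ι ↦ ν) (f := A.indicator (1 : κ → ℝ))
      (measurable_one.indicator hA).aestronglyMeasurable, integral_indicator_one hA]
  have hmem (f : ι → κ) : A.indicator (1 : κ → ℝ) (f i) ∈ Set.Icc (0 : ℝ) 1 := by
    by_cases h : f i ∈ A <;> simp [h]
  have hsub := hasSubgaussianMGF_of_mem_Icc (μ := Measure.pi fun _ : ι ↦ ν)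
    ((measurable_one.indicator hA).comp (measurable_pi_apply i)).aemeasurable (ae_of_all _ hmem)
  simp only [Function.comp_apply, hmean] at hsub
  convert! hsub using 1
  norm_num

theorem measureReal_pi_le_abs_card_sub_le [Fintype ι] (s : Finset ι) {A : ι → Set κ}
    (hA : ∀ i, MeasurableSet (A i)) {N r : ℝ} (hN : #s ≤ N) (hr : 0 ≤ r) :
    (Measure.pi fun _ : ι ↦ ν).real {f | r ≤ |(#{i ∈ s | f i ∈ A i} : ℝ) - ∑ i ∈ s, ν.real (A i)|} ≤
      2 * Real.exp (-2 * r ^ 2 / N) := by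
  obtain rfl | hs := s.eq_empty_or_nonempty
  · obtain rfl | hr := hr.eq_or_lt <;> simp [*, Real.exp_nonneg, not_le_of_gt]
  have : 0 < (#s : ℝ) := by exact_mod_cast hs.card_pos
  have hdev (f : ι → κ) : (#{i ∈ s | f i ∈ A i} : ℝ) - ∑ i ∈ s, ν.real (A i) =
      ∑ i ∈ s, ((A i).indicator (1 : κ → ℝ) (f i) - ν.real (A i)) := by
    simp [Set.indicator_apply]
  have hsub : HasSubgaussianMGF (fun f : ι → κ ↦ (#{i ∈ s | f i ∈ A i} : ℝ) - ∑ i ∈ s, ν.real (A i))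
      (∑ i ∈ s, 1 / 4) (Measure.pi fun _ : ι ↦ ν) := by
    simp only [hdev]
    exact .sum_of_iIndepFun
      (iIndepFun_pi fun i ↦ ((measurable_one.indicator (hA i)).sub_const _).aemeasurable)
      fun i _ ↦ hasSubgaussianMGF_pi_indicator_sub ν (hA i) i
  have hexp : Real.exp (-r ^ 2 / (2 * ↑(∑ i ∈ s, (1 / 4 : NNReal)))) ≤
      Real.exp (-2 * r ^ 2 / N) := by
    refine Real.exp_le_exp.2 ?_
    have : -r ^ 2 / (2 * ↑(∑ i ∈ s, (1 / 4 : NNReal))) = -(2 * r ^ 2 / #s) := by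
      simp; field_simp; norm_num
    rw [this, neg_mul, neg_div]
    gcongr
  have hupper := (hsub.measure_ge_le hr).trans hexp
  have hlower := (hsub.neg.measure_ge_le hr).trans hexp
  simp only [le_abs, Set.ofPred_or]
  refine (measureReal_union_le _ _).trans ?_
  simp only [Pi.neg_apply] at hlower
  linarith

theorem exists_forall_abs_card_sub_le [Finite ι] [Fintype J] (s : J → Finset ι)
    {A : J → ι → Set κ} (hA : ∀ j i, MeasurableSet (A j i)) {N r : J → ℝ}
    (hN : ∀ j, #(s j) ≤ N j) (hr : ∀ j, 0 ≤ r j)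
    (hsum : ∑ j, 2 * Real.exp (-2 * r j ^ 2 / N j) < 1) :
    ∃ f : ι → κ, ∀ j, |(#{i ∈ s j | f i ∈ A j i} : ℝ) - ∑ i ∈ s j, ν.real (A j i)| ≤ r j := by
  have := Fintype.ofFinite ι
  set P := Measure.pi fun _ : ι ↦ ν
  set bad : J → Set (ι → κ) := fun j ↦
    {f | r j ≤ |(#{i ∈ s j | f i ∈ A j i} : ℝ) - ∑ i ∈ s j, ν.real (A j i)|}
  by_contra! hbad
  have hcover : Set.univ ⊆ ⋃ j, bad j := fun f _ ↦
    let ⟨j, hj⟩ := hbad f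
    Set.mem_iUnion.2 ⟨j, hj.le⟩
  refine hsum.not_ge ?_
  calc
    1 = P.real Set.univ := by simp
    _ ≤ ∑ j, P.real (bad j) := (measureReal_mono hcover).trans (measureReal_iUnion_fintype_le _)
    _ ≤ ∑ j, 2 * Real.exp (-2 * r j ^ 2 / N j) :=
      sum_le_sum fun j _ ↦ measureReal_pi_le_abs_card_sub_le ν (s j) (hA j) (hN j) (hr j)

end Concentration

section BipartiteRelations

variable {X Y : Type*}

theorem card_interedges_eq_sum_left (Q : X → Y → Prop) (S : Finset X) (T : Finset Y) :
    #(Rel.interedges Q S T) = ∑ x ∈ S, #{y ∈ T | Q x y} := by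
  simp only [Rel.interedges, card_filter, sum_product]

theorem card_interedges_eq_sum_right (Q : X → Y → Prop) (S : Finset X) (T : Finset Y) :
    #(Rel.interedges Q S T) = ∑ y ∈ T, #{x ∈ S | Q x y} := by
  simp only [Rel.interedges, card_filter, sum_product_right]

theorem card_interedges_swap (Q : X → Y → Prop) (S : Finset X) (T : Finset Y) :
    #(Rel.interedges (fun y x ↦ Q x y) T S) = #(Rel.interedges Q S T) := by
  rw [card_interedges_eq_sum_left, card_interedges_eq_sum_right]

theorem card_interedges_mono {P Q : X → Y → Prop} (hPQ : ∀ x y, P x y → Q x y) (S : Finset X)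
    (T : Finset Y) : #(Rel.interedges P S T) ≤ #(Rel.interedges Q S T) :=
  card_le_card (monotone_filter_right _ fun e _ ↦ hPQ e.1 e.2)

theorem card_mul_sub_le_card_interedges [Fintype Y] (Q : X → Y → Prop) {d : ℝ} {S : Finset X}
    (hd : ∀ x ∈ S, d ≤ #{y | Q x y}) (T : Finset Y) :
    #S * (d - (Fintype.card Y - #T)) ≤ #(Rel.interedges Q S T) := by
  rw [card_interedges_eq_sum_left, Nat.cast_sum, ← nsmul_eq_mul]
  refine card_nsmul_le_sum _ _ _ fun x hx ↦ ?_
  have hsplit : #{y | Q x y} ≤ #{y ∈ T | Q x y} + #Tᶜ := by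
    refine (card_le_card fun y hy ↦ ?_).trans (card_union_le _ _)
    by_cases h : y ∈ T <;> simp_all
  have hcompl := card_add_card_compl T
  rify at hsplit hcompl
  linarith [hd x hx]

variable [Fintype X] [Fintype Y]

theorem exists_injective_incident_edges (Q : X → Y → Prop) (f : X → ℕ) (g : Y → ℕ)
    (h : ∀ (S : Finset X) (T : Finset Y), ∑ x ∈ S, f x + ∑ y ∈ T, g y ≤
      #(Rel.interedges Q S Tᶜ) + #(Rel.interedges Q univ T)) :
    ∃ φ : (Σ x, Fin (f x)) ⊕ (Σ y, Fin (g y)) → X × Y, Function.Injective φ ∧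
      (∀ x i, Q x (φ (.inl ⟨x, i⟩)).2 ∧ (φ (.inl ⟨x, i⟩)).1 = x) ∧
      ∀ y i, Q (φ (.inr ⟨y, i⟩)).1 y ∧ (φ (.inr ⟨y, i⟩)).2 = y := by
  let edgesAt : (Σ x, Fin (f x)) ⊕ (Σ y, Fin (g y)) → Finset (X × Y) :=
    Sum.elim (fun p ↦ univ.filter fun e ↦ Q e.1 e.2 ∧ e.1 = p.1)
      (fun p ↦ univ.filter fun e ↦ Q e.1 e.2 ∧ e.2 = p.1)
  have hall (F : Finset ((Σ x, Fin (f x)) ⊕ (Σ y, Fin (g y)))) : #F ≤ #(F.biUnion edgesAt) := by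
    let S : Finset X := {x | ∃ i, .inl ⟨x, i⟩ ∈ F}
    let T : Finset Y := {y | ∃ i, .inr ⟨y, i⟩ ∈ F}
    have hdisj : Disjoint (Rel.interedges Q S Tᶜ) (Rel.interedges Q univ T) :=
      disjoint_left.2 fun e h h' ↦
        mem_compl.1 (Rel.mem_interedges_iff.1 h).2.1 (Rel.mem_interedges_iff.1 h').2.1
    calc
      #F ≤ #((S.sigma fun x ↦ (univ : Finset (Fin (f x)))).disjSum
          (T.sigma fun y ↦ (univ : Finset (Fin (g y))))) := by
        refine card_le_card ?_
        rintro (⟨x, i⟩ | ⟨y, i⟩) hF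
        · simpa [S] using ⟨i, hF⟩
        · simpa [T] using ⟨i, hF⟩
      _ = ∑ x ∈ S, f x + ∑ y ∈ T, g y := by simp [card_disjSum, card_sigma]
      _ ≤ #(Rel.interedges Q S Tᶜ ∪ Rel.interedges Q univ T) := by
        rw [card_union_of_disjoint hdisj]; exact h S T
      _ ≤ #(F.biUnion edgesAt) := by
        refine card_le_card fun e he ↦ mem_biUnion.2 ?_
        simp only [mem_union, Rel.mem_interedges_iff, S, T, mem_filter_univ] at he
        obtain ⟨⟨i, hi⟩, -, hQ⟩ | ⟨-, ⟨i, hi⟩, hQ⟩ := he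
        · exact ⟨_, hi, by simp [edgesAt, hQ]⟩
        · exact ⟨_, hi, by simp [edgesAt, hQ]⟩
  obtain ⟨φ, hφ, hmem⟩ := (all_card_le_biUnion_card_iff_exists_injective edgesAt).1 hall
  refine ⟨φ, hφ, fun x i ↦ ?_, fun y i ↦ ?_⟩
  · have := hmem (.inl ⟨x, i⟩); simp only [edgesAt, Sum.elim_inl, mem_filter_univ] at this; grind
  · have := hmem (.inr ⟨y, i⟩); simp only [edgesAt, Sum.elim_inr, mem_filter_univ] at this; grind

/-- `P` consists of the edges that are assigned to their left end. -/
theorem exists_edge_distribution (Q : X → Y → Prop) (f : X → ℕ) (g : Y → ℕ)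
    (h : ∀ (S : Finset X) (T : Finset Y), ∑ x ∈ S, f x + ∑ y ∈ T, g y ≤
      #(Rel.interedges Q S Tᶜ) + #(Rel.interedges Q univ T)) :
    ∃ P : X → Y → Prop, (∀ x y, P x y → Q x y) ∧ (∀ x, f x ≤ #{y | P x y}) ∧
      ∀ y, g y ≤ #{x | Q x y ∧ ¬P x y} := by
  obtain ⟨φ, hφ, hleft, hright⟩ := exists_injective_incident_edges Q f g h
  refine ⟨fun x y ↦ ∃ i, φ (.inl ⟨x, i⟩) = (x, y), ?_, fun x ↦ ?_, fun y ↦ ?_⟩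
  · rintro x y ⟨i, hi⟩
    simpa [hi] using (hleft x i).1
  · rw [← Fintype.card_fin (f x), ← card_univ]
    refine card_le_card_of_injOn (fun i ↦ (φ (.inl ⟨x, i⟩)).2) (fun i _ ↦ ?_) fun i _ j _ hij ↦ ?_
    · simpa using ⟨i, Prod.ext (hleft x i).2 rfl⟩
    · simpa using hφ (Prod.ext ((hleft x i).2.trans (hleft x j).2.symm) hij)
  · rw [← Fintype.card_fin (g y), ← card_univ]
    refine card_le_card_of_injOn (fun i ↦ (φ (.inr ⟨y, i⟩)).1) (fun i _ ↦ ?_) fun i _ j _ hij ↦ ?_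
    · simp only [coe_filter_univ, Set.mem_ofPred_eq, not_exists]
      refine ⟨(hright y i).1, fun j hj ↦ ?_⟩
      simpa using hφ (hj.trans (Prod.ext rfl (hright y i).2.symm))
    · simpa using hφ (Prod.ext hij ((hright y i).2.trans (hright y j).2.symm))

/-- A bipartite relation all of whose rows and columns have exactly `D` elements. -/
structure IsBiregular (Q : X → Y → Prop) (D : ℕ) : Prop where
  row (x : X) : #{y | Q x y} = D
  col (y : Y) : #{x | Q x y} = D

/-- The **Ore–Ryser theorem**. -/
theorem exists_isBiregular {m D : ℕ} (hX : Fintype.card X = m) (hY : Fintype.card Y = m)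
    (Q : X → Y → Prop)
    (hQ : ∀ (S : Finset X) (T : Finset Y), D * (#S + #T) ≤ #(Rel.interedges Q S T) + D * m) :
    ∃ P : X → Y → Prop, (∀ x y, P x y → Q x y) ∧ IsBiregular P D := by
  have hcolQ (y : Y) : D ≤ #{x | Q x y} := by
    have := hQ univ {y}
    rw [card_interedges_eq_sum_right, sum_singleton, card_univ, hX, card_singleton] at this
    linarith
  obtain ⟨P, hPQ, hrow, hcol⟩ := exists_edge_distribution Q (fun _ ↦ D) (fun y ↦ #{x | Q x y} - D)
    fun S T ↦ by
      have hsum : ∑ y ∈ T, (#{x | Q x y} - D) + #T * D = #(Rel.interedges Q univ T) := by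
        rw [card_interedges_eq_sum_right, ← smul_eq_mul, ← sum_const, ← sum_add_distrib]
        exact sum_congr rfl fun y _ ↦ Nat.sub_add_cancel (hcolQ y)
      have hST := hQ S Tᶜ
      rw [← hY, ← card_add_card_compl T] at hST
      simp only [sum_const, smul_eq_mul]
      linarith
  have hcolP (y : Y) : #{x | P x y} ≤ D := by
    have hdiff : #{x | P x y} + #{x | Q x y ∧ ¬P x y} = #{x | Q x y} := by
      rw [← card_filter_add_card_filter_not (s := {x | Q x y}) (fun x ↦ P x y)]
      simp only [filter_filter, and_iff_right_of_imp (hPQ _ y)]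
    have := hcol y; have := hcolQ y; omega
  have htotal : ∑ x, #{y | P x y} = ∑ y, #{x | P x y} := by
    rw [← card_interedges_eq_sum_left, card_interedges_eq_sum_right]
  have hlow : ∑ _x : X, D ≤ ∑ x, #{y | P x y} := sum_le_sum fun x _ ↦ hrow x
  have hup : ∑ y, #{x | P x y} ≤ ∑ _y : Y, D := sum_le_sum fun y _ ↦ hcolP y
  have hconst : ∑ _x : X, D = ∑ _y : Y, D := by simp [hX, hY]
  refine ⟨P, hPQ, fun x ↦ ?_, fun y ↦ ?_⟩
  · exact ((sum_eq_sum_iff_of_le fun x _ ↦ hrow x).1 (by omega) x (mem_univ x)).symm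
  · exact (sum_eq_sum_iff_of_le fun y _ ↦ hcolP y).1 (by omega) y (mem_univ y)

namespace IsBiregular

variable {Q : X → Y → Prop} {D : ℕ}

theorem exists_equiv (hQ : IsBiregular Q (D + 1)) : ∃ π : X ≃ Y, ∀ x, Q x (π x) := by
  have hcard : Fintype.card X = Fintype.card Y := by
    have : ∑ x, #{y | Q x y} = ∑ y, #{x | Q x y} := by
      rw [← card_interedges_eq_sum_left, card_interedges_eq_sum_right]
    simpa [hQ.row, hQ.col] using this
  have hall (S : Finset X) : #S ≤ #(S.biUnion fun x ↦ {y | Q x y}) := by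
    set T := S.biUnion fun x ↦ ({y | Q x y} : Finset Y)
    refine Nat.le_of_mul_le_mul_right (c := D + 1) ?_ D.succ_pos
    calc
      #S * (D + 1) = ∑ x ∈ S, #{y ∈ T | Q x y} := by
        rw [← smul_eq_mul, ← sum_const]
        refine sum_congr rfl fun x hx ↦ ?_
        rw [← hQ.row x]
        congr 1
        ext y
        simpa [T] using fun h ↦ ⟨x, hx, h⟩
      _ = ∑ y ∈ T, #{x ∈ S | Q x y} := by
        rw [← card_interedges_eq_sum_left, card_interedges_eq_sum_right]
      _ ≤ #T * (D + 1) := by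
        refine (sum_le_card_nsmul _ _ _ fun y _ ↦ ?_).trans_eq (smul_eq_mul _ _)
        exact (card_le_card (filter_subset_filter _ (subset_univ _))).trans_eq (hQ.col y)
  obtain ⟨f, hf, hfQ⟩ := (all_card_le_biUnion_card_iff_exists_injective _).1 hall
  exact ⟨.ofBijective f ((Fintype.bijective_iff_injective_and_card f).2 ⟨hf, hcard⟩),
    fun x ↦ by simpa using hfQ x⟩

theorem diff_equiv (hQ : IsBiregular Q (D + 1)) {π : X ≃ Y} (hπ : ∀ x, Q x (π x)) :
    IsBiregular (fun x y ↦ Q x y ∧ π x ≠ y) D where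
  row x := by
    have : ({y | Q x y ∧ π x ≠ y} : Finset Y) = ({y | Q x y} : Finset Y).erase (π x) := by
      ext; simp [and_comm, eq_comm]
    simp [this, hπ, hQ.row]
  col y := by
    have : ({x | Q x y ∧ π x ≠ y} : Finset X) = ({x | Q x y} : Finset X).erase (π.symm y) := by
      ext; simp [and_comm, Equiv.eq_symm_apply]
    have hy : Q (π.symm y) y := by simpa using hπ (π.symm y)
    simp [this, hy, hQ.col]

theorem exists_equivs (hQ : IsBiregular Q D) :
    ∃ π : Fin D → X ≃ Y, (∀ i x, Q x (π i x)) ∧ ∀ x, Function.Injective fun i ↦ π i x := by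
  induction D generalizing Q with
  | zero => exact ⟨fun i ↦ i.elim0, fun i ↦ i.elim0, fun _ i ↦ i.elim0⟩
  | succ D ih =>
    obtain ⟨π₀, hπ₀⟩ := hQ.exists_equiv
    obtain ⟨π, hπ, hinj⟩ := ih (hQ.diff_equiv hπ₀)
    refine ⟨Fin.cons π₀ π, Fin.cases hπ₀ fun i x ↦ (hπ i x).1, fun x ↦ ?_⟩
    have : (fun i ↦ (Fin.cons π₀ π : Fin (D + 1) → X ≃ Y) i x) =
        Fin.cons (π₀ x) fun i ↦ π i x := by
      ext i; refine Fin.cases rfl (fun _ ↦ rfl) i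
    rw [this, Fin.cons_injective_iff]
    exact ⟨fun ⟨i, hi⟩ ↦ (hπ i x).2 hi.symm, hinj x⟩

end IsBiregular

end BipartiteRelations

section DenseRelations

variable {V : Type*}

theorem injOn_mk_interedges (Q : V → V → Prop) {S T : Finset V} (hST : Disjoint S T) :
    Set.InjOn (fun e : V × V ↦ s(e.1, e.2)) (Rel.interedges Q S T) := by
  rintro ⟨x, y⟩ hxy ⟨x', y'⟩ hxy' h
  obtain ⟨hx, -, -⟩ := Rel.mk_mem_interedges_iff.1 (mem_coe.1 hxy)
  obtain ⟨-, hy', -⟩ := Rel.mk_mem_interedges_iff.1 (mem_coe.1 hxy')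
  obtain ⟨rfl, rfl⟩ | ⟨rfl, -⟩ := Sym2.eq_iff.1 h
  · rfl
  · exact absurd hy' (disjoint_left.1 hST hx)

/-- Passes from disjoint to overlapping sets: cut `T` into pieces `P` of size `a` and compare each
`P` with `S \ P`. -/
theorem mul_sub_mul_sub_le_card_interedges (Q : V → V → Prop) {a : ℕ} (ha : 0 < a) {β : ℝ}
    (hβ : 0 ≤ β)
    (hQ : ∀ S T : Finset V, Disjoint S T → a ≤ #S → a ≤ #T →
      β * (#S * #T) ≤ #(Rel.interedges Q S T))
    {S : Finset V} (hS : 2 * a ≤ #S) (T : Finset V) :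
    β * ((#S - a) * (#T - a)) ≤ #(Rel.interedges Q S T) := by
  have haS : (a : ℝ) ≤ #S := by exact_mod_cast (by omega : a ≤ #S)
  induction T using Finset.strongInduction with
  | H T ih =>
    obtain hT | hT := lt_or_ge #T a
    · have : (#T : ℝ) ≤ a := by exact_mod_cast hT.le
      refine (mul_nonpos_of_nonneg_of_nonpos hβ ?_).trans (Nat.cast_nonneg _)
      exact mul_nonpos_of_nonneg_of_nonpos (by linarith) (by linarith)
    obtain ⟨P, hPT, hP⟩ := exists_subset_card_eq hT
    have hrest := ih (T \ P) (sdiff_ssubset hPT (card_pos.1 (by omega)))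
    have hSP : #S - a ≤ #(S \ P) := hP ▸ le_card_sdiff P S
    have hpiece : β * ((#S - a) * a) ≤ #(Rel.interedges Q S P) := calc
      β * ((#S - a) * a) ≤ β * (#(S \ P) * #P) := by
        have : (#S : ℝ) - a ≤ #(S \ P) := by
          rw [← Nat.cast_sub (by omega)]; exact_mod_cast hSP
        rw [hP]; gcongr
      _ ≤ #(Rel.interedges Q (S \ P) P) := hQ _ _ sdiff_disjoint (by omega) hP.ge
      _ ≤ #(Rel.interedges Q S P) := by
        exact_mod_cast card_le_card (Rel.interedges_mono sdiff_subset subset_rfl)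
    have hsum : #(Rel.interedges Q S P) + #(Rel.interedges Q S (T \ P)) =
        #(Rel.interedges Q S T) := by
      simp only [card_interedges_eq_sum_right]
      rw [add_comm, sum_sdiff hPT]
    have hcard : (#(T \ P) : ℝ) = #T - a := by
      rw [card_sdiff_of_subset hPT, hP, Nat.cast_sub hT]
    rw [← hsum, Nat.cast_add]
    rw [hcard] at hrest
    linarith

/-- The lower half of condition `(Q_b)`: any two disjoint sets of at least `δ` vertices span at
least the fraction `β` of the possible edges. -/
def IsPairDense (B : SimpleGraph V) (β δ : ℝ) : Prop :=
  ∀ ⦃S T : Finset V⦄, Disjoint S T → δ ≤ #S → δ ≤ #T →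
    β * (#S * #T) ≤ #(Rel.interedges B.Adj S T)

theorem IsPairDense.mono {B : SimpleGraph V} {β β' δ : ℝ} (hB : IsPairDense B β δ)
    (hβ : β' ≤ β) : IsPairDense B β' δ :=
  fun _ _ hST hS hT ↦ le_trans (by gcongr) (hB hST hS hT)

variable (B : SimpleGraph V) {n : ℕ} {β δ : ℝ}

theorem mul_sub_mul_sub_le_card_interedges_of_real (hβ : 0 ≤ β) (hδ : 0 < δ)
    (hpair : IsPairDense B β δ)
    {S T : Finset V} (hS : 2 * (δ + 1) ≤ #S) (hT : δ + 1 ≤ #T) :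
    β * ((#S - (δ + 1)) * (#T - (δ + 1))) ≤ #(Rel.interedges B.Adj S T) := by
  have hceil : (⌈δ⌉₊ : ℝ) ≤ δ + 1 := (Nat.ceil_lt_add_one hδ.le).le
  have hSceil : 2 * ⌈δ⌉₊ ≤ #S := by
    have : 2 * (⌈δ⌉₊ : ℝ) ≤ #S := by linarith
    exact_mod_cast this
  refine le_trans ?_ (mul_sub_mul_sub_le_card_interedges B.Adj (Nat.ceil_pos.2 hδ) hβ
    (fun S T hST hS hT ↦ hpair hST (Nat.ceil_le.1 hS) (Nat.ceil_le.1 hT)) hSceil T)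
  gcongr
  linarith

variable [Fintype V]

theorem mul_add_sub_le_card_interedges_of_le (hn : Fintype.card V = n)
    (hdeg : ∀ v, β * n ≤ #{w | B.Adj v w}) {r : ℝ} (hr : r ≤ β * n)
    {S T : Finset V} (hST : (n : ℝ) ≤ #S + #T) (hS : #S ≤ β * n) :
    r * (#S + #T - n) ≤ #(Rel.interedges B.Adj S T) := by
  have hT : (#T : ℝ) ≤ n := by exact_mod_cast hn ▸ card_le_univ T
  have h := card_mul_sub_le_card_interedges B.Adj (fun x (_ : x ∈ S) ↦ hdeg x) T
  have hr' := mul_le_mul_of_nonneg_right hr (sub_nonneg.2 hST)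
  rw [hn] at h
  nlinarith [mul_nonneg (sub_nonneg.2 hS) (sub_nonneg.2 hT)]

theorem exists_isBiregular_of_degree_of_dense {ε : ℝ} (hn : Fintype.card V = n) (hε : 0 < ε)
    (hβ : 4 * ε ≤ β) (hbig : 4 ≤ ε * n) (hdeg : ∀ v, β * n ≤ #{w | B.Adj v w})
    (hpair : IsPairDense B β (ε * n))
    {r : ℕ} (hr : r ≤ (β - 5 / 2 * ε) * n) :
    ∃ R : V → V → Prop, (∀ x y, R x y → B.Adj x y) ∧ IsBiregular R r := by
  refine exists_isBiregular hn hn _ fun S T ↦ ?_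
  suffices h : (r : ℝ) * (#S + #T - n) ≤ #(Rel.interedges B.Adj S T) by
    rify; linarith
  have hs : (#S : ℝ) ≤ n := by exact_mod_cast hn ▸ card_le_univ S
  have ht : (#T : ℝ) ≤ n := by exact_mod_cast hn ▸ card_le_univ T
  have hrβ : (r : ℝ) ≤ β * n := by linarith
  obtain hST | hST := le_total ((#S : ℝ) + #T) n
  · exact (mul_nonpos_of_nonneg_of_nonpos r.cast_nonneg (by linarith)).trans (Nat.cast_nonneg _)
  obtain hSβ | hSβ := le_total (#S : ℝ) (β * n)
  · exact mul_add_sub_le_card_interedges_of_le B hn hdeg hrβ hST hSβ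
  obtain hTβ | hTβ := le_total (#T : ℝ) (β * n)
  · have := mul_add_sub_le_card_interedges_of_le B hn hdeg hrβ (S := T) (T := S) (by linarith) hTβ
    rw [← card_interedges_swap] at this
    simpa only [B.adj_comm, add_comm] using this
  have hβn : 4 * (ε * n) ≤ β * n := by nlinarith
  refine le_trans ?_ (mul_sub_mul_sub_le_card_interedges_of_real B (by linarith) (by linarith)
    hpair (by linarith) (by linarith))
  have hδ : ε * n + 1 ≤ 5 / 4 * (ε * n) := by linarith
  have hw : n * (#S + #T - n) ≤ (#S * #T : ℝ) := by
    nlinarith [mul_nonneg (sub_nonneg.2 hs) (sub_nonneg.2 ht)]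
  calc
    (r : ℝ) * (#S + #T - n) ≤ (β - 5 / 2 * ε) * n * (#S + #T - n) := by gcongr
    _ = (β - 5 / 2 * ε) * (n * (#S + #T - n)) := by ring
    _ ≤ (β - 5 / 2 * ε) * (#S * #T) := by gcongr; linarith
    _ = β * (#S * #T) - 5 / 4 * ε * #S * #T - 5 / 4 * ε * #T * #S := by ring
    _ ≤ β * (#S * #T) - 5 / 4 * ε * #S * (β * n) - 5 / 4 * ε * #T * (β * n) := by gcongr
    _ = β * (#S * #T - 5 / 4 * (ε * n) * (#S + #T)) := by ring
    _ ≤ β * (#S * #T - (ε * n + 1) * (#S + #T) + (ε * n + 1) ^ 2) := by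
      gcongr
      · linarith
      · nlinarith
    _ = β * ((#S - (ε * n + 1)) * (#T - (ε * n + 1))) := by ring

theorem card_filter_card_adj_lt_le (hδ : 10 ≤ δ) {α : ℝ} (hα : 0 < α) (hβα : 99 / 100 * α ≤ β)
    (hpair : IsPairDense B β δ)
    {W : Finset V} (hW : 4 * δ ≤ #W) :
    #{x | (#{y ∈ W | B.Adj x y} : ℝ) < α / 2 * #W} ≤ 4 * δ := by
  set Z : Finset V := {x | (#{y ∈ W | B.Adj x y} : ℝ) < α / 2 * #W}
  by_contra! hZ
  have hlow := mul_sub_mul_sub_le_card_interedges_of_real B (by linarith) (by linarith) hpair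
    (S := Z) (T := W) (by linarith) (by linarith)
  have hup : (#(Rel.interedges B.Adj Z W) : ℝ) ≤ #Z * (α / 2 * #W) := by
    rw [card_interedges_eq_sum_left, Nat.cast_sum, ← nsmul_eq_mul]
    exact sum_le_card_nsmul _ _ _ fun x hx ↦ ((mem_filter_univ x).1 hx).le
  have hprod : (72 / 100 * #Z : ℝ) * (72 / 100 * #W) ≤ (#Z - (δ + 1)) * (#W - (δ + 1)) := by
    gcongr <;> linarith
  have : 0 < α * (#Z * #W : ℝ) := by
    have : 0 < (#Z : ℝ) := by linarith
    have : 0 < (#W : ℝ) := by linarith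
    positivity
  nlinarith [mul_le_mul hβα hprod (by positivity) (by linarith)]

end DenseRelations

section CyclicLists

variable {V : Type*}

/-- The list `l` enumerates `V` without repetition. -/
structure IsEnumeration (l : List V) : Prop where
  nodup : l.Nodup
  mem : ∀ v, v ∈ l

theorem IsEnumeration.perm {l l' : List V} (hl : IsEnumeration l) (h : l.Perm l') :
    IsEnumeration l' :=
  ⟨h.nodup_iff.1 hl.nodup, fun v ↦ h.mem_iff.1 (hl.mem v)⟩

theorem IsEnumeration.length_eq [Fintype V] {l : List V} (hl : IsEnumeration l) :
    l.length = Fintype.card V := by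
  rw [← List.toFinset_card_of_nodup hl.nodup, ← card_univ]
  congr 1
  exact eq_univ_of_forall fun v ↦ List.mem_toFinset.2 (hl.mem v)

/-- The edges joining consecutive entries of a list. -/
def pathEdges : List V → Multiset (Sym2 V)
  | [] => 0
  | [_] => 0
  | x :: y :: t => s(x, y) ::ₘ pathEdges (y :: t)

/-- The edges joining cyclically consecutive entries of a list; for a list of length one this is a
loop. -/
def cycleEdges : List V → Multiset (Sym2 V)
  | [] => 0
  | x :: t => s((x :: t).getLast (List.cons_ne_nil x t), x) ::ₘ pathEdges (x :: t)

theorem cycleEdges_of_ne_nil : ∀ {l : List V} (h : l ≠ []),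
    cycleEdges l = s(l.getLast h, l.head h) ::ₘ pathEdges l
  | _ :: _, _ => rfl

theorem pathEdges_append {P Q : List V} (hP : P ≠ []) (hQ : Q ≠ []) :
    pathEdges (P ++ Q) = pathEdges P + pathEdges Q + {s(P.getLast hP, Q.head hQ)} := by
  induction P with
  | nil => exact absurd rfl hP
  | cons x t ih =>
    cases t with
    | nil =>
      obtain ⟨y, Q, rfl⟩ := List.exists_cons_of_ne_nil hQ
      simp [pathEdges, add_comm (pathEdges _)]
    | cons y t =>
      simpa [pathEdges] using ih (List.cons_ne_nil y t)

theorem pathEdges_reverse (P : List V) : pathEdges P.reverse = pathEdges P := by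
  induction P with
  | nil => rfl
  | cons x t ih =>
    cases t with
    | nil => rfl
    | cons y t =>
      rw [List.reverse_cons, pathEdges_append (by simp) (List.cons_ne_nil x []), ih]
      simp [pathEdges, add_comm (pathEdges _), Sym2.eq_swap]

theorem card_pathEdges (l : List V) : (pathEdges l).card = l.length - 1 := by
  induction l with
  | nil => rfl
  | cons x t ih => cases t <;> simp_all [pathEdges]

theorem mem_of_mem_pathEdges {l : List V} {e : Sym2 V} (he : e ∈ pathEdges l) {v : V}
    (hv : v ∈ e) : v ∈ l := by
  induction l with
  | nil => simp [pathEdges] at he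
  | cons x t ih =>
    cases t with
    | nil => simp [pathEdges] at he
    | cons y t =>
      obtain rfl | he := Multiset.mem_cons.1 he
      · obtain rfl | rfl := Sym2.mem_iff.1 hv <;> simp
      · exact List.mem_cons_of_mem x (ih he)

theorem cycleEdges_append {P Q : List V} (hP : P ≠ []) (hQ : Q ≠ []) :
    cycleEdges (P ++ Q) = pathEdges P + pathEdges Q +
      {s(P.getLast hP, Q.head hQ), s(Q.getLast hQ, P.head hP)} := by
  rw [cycleEdges_of_ne_nil (List.append_ne_nil_of_left_ne_nil hP Q), pathEdges_append hP hQ,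
    List.getLast_append_of_ne_nil _ hQ, List.head_append_of_ne_nil hP, Multiset.insert_eq_cons,
    ← Multiset.singleton_add, ← Multiset.singleton_add]
  abel

theorem cycleEdges_append_comm (P Q : List V) : cycleEdges (P ++ Q) = cycleEdges (Q ++ P) := by
  obtain rfl | hP := eq_or_ne P []
  · simp
  obtain rfl | hQ := eq_or_ne Q []
  · simp
  rw [cycleEdges_append hP hQ, cycleEdges_append hQ hP, Multiset.pair_comm,
    add_comm (pathEdges P)]

theorem cycleEdges_append_append {P Q R : List V} (hP : P ≠ []) (hQ : Q ≠ []) (hR : R ≠ []) :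
    cycleEdges (P ++ (Q ++ R)) = pathEdges P + pathEdges Q + pathEdges R +
      {s(P.getLast hP, Q.head hQ), s(Q.getLast hQ, R.head hR), s(R.getLast hR, P.head hP)} := by
  rw [cycleEdges_append hP (List.append_ne_nil_of_left_ne_nil hQ R), pathEdges_append hQ hR,
    List.getLast_append_of_ne_nil _ hR, List.head_append_of_ne_nil hQ]
  simp only [Multiset.insert_eq_cons, ← Multiset.singleton_add]
  abel

theorem cycleEdges_reverse_append_append_reverse {P Q R : List V} (hP : P ≠ []) (hQ : Q ≠ [])
    (hR : R ≠ []) : cycleEdges (P.reverse ++ (Q ++ R.reverse)) =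
      pathEdges P + pathEdges Q + pathEdges R +
        {s(P.head hP, Q.head hQ), s(Q.getLast hQ, R.getLast hR), s(R.head hR, P.getLast hP)} := by
  rw [cycleEdges_append_append (by simpa) hQ (by simpa)]
  simp only [pathEdges_reverse, List.getLast_reverse, List.head_reverse]

theorem cycleEdges_append_reverse_append_reverse {P Q R : List V} (hP : P ≠ []) (hQ : Q ≠ [])
    (hR : R ≠ []) : cycleEdges (R ++ (P.reverse ++ Q.reverse)) =
      pathEdges P + pathEdges Q + pathEdges R +
        {s(R.getLast hR, P.getLast hP), s(P.head hP, Q.getLast hQ), s(Q.head hQ, R.head hR)} := by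
  rw [cycleEdges_append_append hR (by simpa) (by simpa)]
  simp only [pathEdges_reverse, List.getLast_reverse, List.head_reverse]
  abel

theorem exists_append_of_mem_pathEdges {l : List V} {e : Sym2 V} (he : e ∈ pathEdges l) :
    ∃ (P Q : List V) (hP : P ≠ []) (hQ : Q ≠ []), l = P ++ Q ∧ e = s(P.getLast hP, Q.head hQ) := by
  induction l with
  | nil => simp [pathEdges] at he
  | cons x t ih =>
    cases t with
    | nil => simp [pathEdges] at he
    | cons y t =>
      obtain rfl | he := Multiset.mem_cons.1 he
      · exact ⟨[x], y :: t, by simp, by simp, rfl, rfl⟩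
      · obtain ⟨P, Q, hP, hQ, hPQ, rfl⟩ := ih he
        exact ⟨x :: P, Q, by simp, hQ, by simp [hPQ], by simp [List.getLast_cons hP]⟩

theorem exists_perm_of_mem_cycleEdges {l : List V} {e : Sym2 V} (he : e ∈ cycleEdges l) :
    ∃ (l' : List V) (h : l' ≠ []), l.Perm l' ∧ cycleEdges l' = cycleEdges l ∧
      e = s(l'.getLast h, l'.head h) := by
  obtain rfl | hl := eq_or_ne l []
  · simp [cycleEdges] at he
  rw [cycleEdges_of_ne_nil hl] at he
  obtain rfl | he := Multiset.mem_cons.1 he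
  · exact ⟨l, hl, .refl l, rfl, rfl⟩
  · obtain ⟨P, Q, hP, hQ, rfl, rfl⟩ := exists_append_of_mem_pathEdges he
    exact ⟨Q ++ P, by simp [hP], List.perm_append_comm, cycleEdges_append_comm Q P,
      by rw [List.getLast_append_of_ne_nil _ hP, List.head_append_of_ne_nil hQ]⟩

theorem countP_mem_pathEdges_add_le (v x : V) (t : List V) :
    (pathEdges (x :: t)).countP (v ∈ ·) + (if v = x then 1 else 0) +
      (if v = (x :: t).getLast (List.cons_ne_nil x t) then 1 else 0) ≤
      2 * (x :: t).count v := by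
  induction t generalizing x with
  | nil => by_cases h : v = x <;> simp [pathEdges, h]
  | cons y t ih =>
    have hedge : (if v ∈ s(x, y) then 1 else 0) ≤
        (if v = x then 1 else 0) + if v = y then 1 else 0 := by
      grind
    have hcount : (x :: y :: t).count v = (y :: t).count v + if v = x then 1 else 0 := by
      grind
    rw [hcount, pathEdges, Multiset.countP_cons, List.getLast_cons (List.cons_ne_nil y t)]
    linarith [ih y]

theorem countP_mem_cycleEdges_le (v : V) (l : List V) :
    (cycleEdges l).countP (v ∈ ·) ≤ 2 * l.count v := by
  cases l with
  | nil => simp [cycleEdges]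
  | cons x t =>
    refine le_trans ?_ (countP_mem_pathEdges_add_le v x t)
    rw [cycleEdges, Multiset.countP_cons, add_assoc]
    gcongr
    grind

theorem card_filter_mk_mem_le_countP [Fintype V] (M : Multiset (Sym2 V)) (v : V) :
    #{w | s(v, w) ∈ M} ≤ M.countP (v ∈ ·) := by
  calc
    #{w | s(v, w) ∈ M} = #(image (fun w ↦ s(v, w)) {w | s(v, w) ∈ M}) :=
      (card_image_of_injective _ fun _ _ ↦ Sym2.congr_right.1).symm
    _ ≤ #(M.filter (v ∈ ·)).toFinset := card_le_card fun e he ↦ by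
      obtain ⟨w, hw, rfl⟩ := mem_image.1 he
      simpa using hw
    _ ≤ M.countP (v ∈ ·) := by
      rw [Multiset.countP_eq_card_filter]
      exact Multiset.toFinset_card_le _

theorem IsEnumeration.card_filter_mk_mem_cycleEdges_le [Fintype V] {l : List V}
    (hl : IsEnumeration l) (v : V) : #{w | s(v, w) ∈ cycleEdges l} ≤ 2 :=
  (card_filter_mk_mem_le_countP _ v).trans <| (countP_mem_cycleEdges_le v l).trans <| by
    rw [List.count_eq_one_of_mem hl.nodup (hl.mem v)]

theorem exists_walk_of_pathEdges (G : SimpleGraph V) (x : V) (t : List V)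
    (h : ∀ e ∈ pathEdges (x :: t), e ∈ G.edgeSet) :
    ∃ w : G.Walk x ((x :: t).getLast (List.cons_ne_nil x t)),
      w.support = x :: t ∧ (w.edges : Multiset (Sym2 V)) = pathEdges (x :: t) := by
  induction t generalizing x with
  | nil => exact ⟨.nil, rfl, rfl⟩
  | cons y t ih =>
    obtain ⟨w, hsupport, hedges⟩ := ih y fun e he ↦ h e (Multiset.mem_cons_of_mem he)
    have hxy : G.Adj x y := h _ (Multiset.mem_cons_self _ _)
    refine ⟨.cons hxy (w.copy rfl (by simp)), by simp [hsupport], ?_⟩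
    simpa [pathEdges, ← Multiset.cons_coe] using hedges

theorem getLast_head_notMem_pathEdges {x : V} {t : List V} (ht : 2 ≤ t.length)
    (hnodup : (x :: t).Nodup) :
    s((x :: t).getLast (List.cons_ne_nil x t), x) ∉ pathEdges (x :: t) := by
  obtain _ | ⟨y, _ | ⟨z, t⟩⟩ := t
  · simp at ht
  · simp at ht
  obtain ⟨hx, hy, -⟩ := by simpa only [List.nodup_cons] using hnodup
  have hlast : (x :: y :: z :: t).getLast (by simp) ∈ z :: t := by
    rw [List.getLast_cons (by simp), List.getLast_cons (by simp)]
    exact List.getLast_mem _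
  rw [pathEdges, Multiset.mem_cons, not_or]
  refine ⟨fun h ↦ ?_, fun h ↦ hx (mem_of_mem_pathEdges h (Sym2.mem_mk_right _ _))⟩
  rw [Sym2.eq_swap, Sym2.congr_right] at h
  exact hy (h ▸ hlast)

theorem IsEnumeration.exists_isHamiltonianCycle [Fintype V] {l : List V} (hl : IsEnumeration l)
    (hV : 3 ≤ Fintype.card V) (G : SimpleGraph V) (hG : ∀ e ∈ cycleEdges l, e ∈ G.edgeSet) :
    ∃ (a : V) (w : G.Walk a a), w.IsHamiltonianCycle ∧
      (cycleEdges l).toFinset = w.edges.toFinset := by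
  have hlen := hl.length_eq
  cases l with
  | nil => simp at hlen; omega
  | cons x t =>
    obtain ⟨w, hsupport, hedges⟩ := exists_walk_of_pathEdges G x t
      fun e he ↦ hG e (Multiset.mem_cons_of_mem he)
    have hclose : G.Adj ((x :: t).getLast (List.cons_ne_nil x t)) x :=
      hG _ (Multiset.mem_cons_self _ _)
    refine ⟨_, .cons hclose w, ?_, ?_⟩
    · rw [SimpleGraph.Walk.isHamiltonianCycle_iff_isCycle_and_length_eq,
        SimpleGraph.Walk.cons_isCycle_iff, SimpleGraph.Walk.isPath_def, hsupport,
        ← Multiset.mem_coe, hedges, SimpleGraph.Walk.length_cons,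
        ← SimpleGraph.Walk.length_support, hsupport, hlen]
      rw [List.length_cons] at hlen
      exact ⟨⟨hl.nodup, getLast_head_notMem_pathEdges (by omega) hl.nodup⟩, rfl⟩
    · ext e
      simp [cycleEdges, ← hedges]

end CyclicLists

section Rotation

variable {V : Type*}

theorem exists_le_card_filter_le_and_ge {I : Finset ℕ} {a : ℕ} (hI : 2 * a ≤ #I) :
    ∃ t, a ≤ #{i ∈ I | i ≤ t} ∧ a ≤ #{i ∈ I | t ≤ i} := by
  have hex : ∃ t, a ≤ #{i ∈ I | i ≤ t} := by
    refine ⟨I.sup id, ?_⟩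
    rw [filter_true_of_mem fun i hi ↦ show i ≤ I.sup id from le_sup (f := id) hi]
    omega
  refine ⟨Nat.find hex, Nat.find_spec hex, ?_⟩
  have hlt : #{i ∈ I | i < Nat.find hex} ≤ a := by
    obtain h | h := (Nat.find hex).eq_zero_or_pos
    · simp [h]
    · have hmin := Nat.find_min hex (Nat.pred_lt h.ne')
      have hiff (i : ℕ) : i < Nat.find hex ↔ i ≤ (Nat.find hex).pred := Nat.lt_iff_le_pred h
      simpa only [hiff] using (not_le.1 hmin).le
  have := card_filter_add_card_filter_not (s := I) (· < Nat.find hex)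
  simp only [not_lt] at this
  omega

theorem exists_eq_append_append {l : List V} {s t : ℕ} (hs : 0 < s) (hst : s < t)
    (ht : t < l.length) :
    ∃ (P Q R : List V) (hP : P ≠ []) (hQ : Q ≠ []) (hR : R ≠ []), l = P ++ (Q ++ R) ∧
      P.getLast hP = l[s - 1] ∧ Q.head hQ = l[s] ∧ Q.getLast hQ = l[t - 1] ∧ R.head hR = l[t] := by
  have hP : l.take s ≠ [] := by simp; grind
  have hQ : (l.take t).drop s ≠ [] := by simp; grind
  have hR : l.drop t ≠ [] := by simp; grind
  refine ⟨l.take s, (l.take t).drop s, l.drop t, hP, hQ, hR, ?_, ?_, ?_, ?_, ?_⟩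
  · conv_lhs => rw [← l.take_append_drop t, ← (l.take t).take_append_drop s, List.take_take,
      min_eq_left hst.le]
    rw [List.append_assoc]
  all_goals grind

/-- The expansion used by the rotations: minimum degree at least `2 * a`, and an edge between any
two disjoint sets of size at least `a`. -/
structure IsExpander [Fintype V] (L : SimpleGraph V) (a : ℕ) : Prop where
  two_mul_le_degree : ∀ v, 2 * a ≤ #{w | L.Adj v w}
  exists_adj : ∀ S T : Finset V, Disjoint S T → a ≤ #S → a ≤ #T → ∃ x ∈ S, ∃ y ∈ T, L.Adj x y

variable [Fintype V] {L : SimpleGraph V} {a : ℕ}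

theorem IsExpander.exists_adj_of_injOn (hL : IsExpander L a) {I J : Finset ℕ} {f g : ℕ → V}
    (hf : Set.InjOn f I) (hg : Set.InjOn g J) (hfg : ∀ i ∈ I, ∀ j ∈ J, f i ≠ g j) (hI : a ≤ #I)
    (hJ : a ≤ #J) : ∃ i ∈ I, ∃ j ∈ J, L.Adj (f i) (g j) := by
  have hdisj : Disjoint (I.image f) (J.image g) := by
    simpa [disjoint_left] using fun i hi j hj h ↦ hfg i hi j hj h.symm
  have := hL.exists_adj _ _ hdisj (by rwa [card_image_of_injOn hf])
    (by rwa [card_image_of_injOn hg])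
  simpa only [exists_mem_image] using this

theorem IsExpander.exists_index (hL : IsExpander L a) {p : ℕ → V} {n : ℕ}
    (hp : Set.InjOn p (Set.Iio n)) {I J : Finset ℕ} (hI : ∀ i ∈ I, i + 1 < n)
    (hJ : ∀ j ∈ J, 1 ≤ j ∧ j + 1 < n) (hIa : 2 * a ≤ #I) (hJa : 2 * a ≤ #J) :
    ∃ i ∈ I, ∃ j ∈ J, j ≤ i ∧ L.Adj (p (i + 1)) (p (j - 1)) ∨
      i < j ∧ L.Adj (p (i + 1)) (p (j + 1)) := by
  have hinj : ∀ i j, i < n → j < n → p i = p j → i = j := fun i j hi hj ↦ hp hi hj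
  have hIinj : Set.InjOn (fun i ↦ p (i + 1)) I := fun i hi j hj h ↦
    Nat.succ_injective <| hinj _ _ (hI i hi) (hI j hj) h
  obtain ⟨t, hIle, hIge⟩ := exists_le_card_filter_le_and_ge hIa
  obtain hJle | hJgt : a ≤ #{j ∈ J | j ≤ t} ∨ a ≤ #{j ∈ J | ¬ j ≤ t} := by
    have := card_filter_add_card_filter_not (s := J) (· ≤ t)
    omega
  · obtain ⟨i, hi, j, hj, hij⟩ := hL.exists_adj_of_injOn (I := {i ∈ I | t ≤ i})
      (J := {j ∈ J | j ≤ t}) (f := fun i ↦ p (i + 1)) (g := fun j ↦ p (j - 1))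
      (hIinj.mono (filter_subset _ _)) (by grind [Set.InjOn]) (by grind) hIge hJle
    rw [mem_filter] at hi hj
    exact ⟨i, hi.1, j, hj.1, .inl ⟨hj.2.trans hi.2, hij⟩⟩
  · obtain ⟨i, hi, j, hj, hij⟩ := hL.exists_adj_of_injOn (I := {i ∈ I | i ≤ t})
      (J := {j ∈ J | ¬ j ≤ t}) (f := fun i ↦ p (i + 1)) (g := fun j ↦ p (j + 1))
      (hIinj.mono (filter_subset _ _)) (by grind [Set.InjOn]) (by grind) hIle hJgt
    rw [mem_filter] at hi hj
    exact ⟨i, hi.1, j, hj.1, .inr ⟨by omega, hij⟩⟩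

theorem IsEnumeration.le_card_range_filter {l : List V} (hl : IsEnumeration l) {p : ℕ → V}
    (hp : ∀ i (hi : i < l.length), p i = l[i]) (Q : V → Prop) :
    #{v | Q v} ≤ #{i ∈ range l.length | Q (p i)} := by
  refine (card_le_card fun v hv ↦ ?_).trans (card_image_le (f := p))
  obtain ⟨i, hi, rfl⟩ := List.getElem_of_mem (hl.mem v)
  exact mem_image.2 ⟨i, by simpa [hp i hi, hi] using hv, hp i hi⟩

theorem IsExpander.exists_getElem_adj (hL : IsExpander L a) {l : List V} (hl : IsEnumeration l)
    (hne : l ≠ []) (hend : ¬ L.Adj (l.getLast hne) (l.head hne)) :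
    ∃ (i j : ℕ) (hi : i + 1 < l.length) (hj : j + 1 < l.length), 1 ≤ j ∧
      L.Adj (l.getLast hne) l[i] ∧ L.Adj (l.head hne) l[j] ∧
      (j ≤ i ∧ L.Adj l[i + 1] l[j - 1] ∨ i < j ∧ L.Adj l[i + 1] l[j + 1]) := by
  set p : ℕ → V := fun i ↦ l.getD i (l.head hne) with hp
  have hpl : ∀ i (hi : i < l.length), p i = l[i] := fun i hi ↦ by simp [hp, hi]
  have hlen : 0 < l.length := List.length_pos_of_ne_nil hne
  have hhead : p 0 = l.head hne := by rw [hpl 0 hlen, List.head_eq_getElem]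
  have hlast : p (l.length - 1) = l.getLast hne := by
    rw [hpl _ (by omega), List.getLast_eq_getElem]
  have hinj : Set.InjOn p (Set.Iio l.length) := fun i hi j hj hij ↦ by
    rw [hpl i hi, hpl j hj] at hij
    exact hl.nodup.getElem_inj_iff.1 hij
  have hI : ∀ i ∈ ({i ∈ range l.length | L.Adj (l.getLast hne) (p i)} : Finset ℕ),
      i + 1 < l.length := fun i hi ↦ by
    simp only [mem_filter, mem_range] at hi
    have : i ≠ l.length - 1 := by rintro rfl; simp [hlast] at hi
    omega
  have hJ : ∀ j ∈ ({j ∈ range l.length | L.Adj (l.head hne) (p j)} : Finset ℕ),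
      1 ≤ j ∧ j + 1 < l.length := fun j hj ↦ by
    simp only [mem_filter, mem_range] at hj
    have : j ≠ l.length - 1 := by rintro rfl; exact hend (hlast ▸ hj.2.symm)
    have : j ≠ 0 := by rintro rfl; simp [hhead] at hj
    omega
  obtain ⟨i, hi, j, hj, hij⟩ := hL.exists_index hinj hI hJ
    ((hL.two_mul_le_degree _).trans (hl.le_card_range_filter hpl _))
    ((hL.two_mul_le_degree _).trans (hl.le_card_range_filter hpl _))
  have hi' := hI i hi
  obtain ⟨hj1, hj'⟩ := hJ j hj
  refine ⟨i, j, hi', hj', hj1, ?_, ?_, ?_⟩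
  · rw [← hpl]; exact (mem_filter.1 hi).2
  · rw [← hpl]; exact (mem_filter.1 hj).2
  · rwa [← hpl, ← hpl, ← hpl]

theorem IsExpander.exists_splitting (hL : IsExpander L a) {l : List V} (hl : IsEnumeration l)
    (hne : l ≠ []) (hend : ¬ L.Adj (l.getLast hne) (l.head hne)) :
    ∃ (P Q R : List V) (hP : P ≠ []) (hQ : Q ≠ []) (hR : R ≠ []), l = P ++ (Q ++ R) ∧
      (L.Adj (P.head hP) (Q.head hQ) ∧ L.Adj (Q.getLast hQ) (R.getLast hR) ∧
          L.Adj (R.head hR) (P.getLast hP) ∨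
        L.Adj (R.getLast hR) (P.getLast hP) ∧ L.Adj (P.head hP) (Q.getLast hQ) ∧
          L.Adj (Q.head hQ) (R.head hR)) := by
  obtain ⟨i, j, hi, hj, hj1, hlast, hhead, ⟨hji, hadj⟩ | ⟨hij, hadj⟩⟩ :=
    hL.exists_getElem_adj hl hne hend
  · obtain ⟨P, Q, R, hP, hQ, hR, rfl, hPl, hQh, hQl, hRh⟩ :=
      exists_eq_append_append hj1 (show j < i + 1 by omega) hi
    refine ⟨P, Q, R, hP, hQ, hR, rfl, .inl ?_⟩
    simp only [Nat.add_sub_cancel] at hQl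
    rw [← hPl, ← hRh] at hadj
    rw [← hQl, List.getLast_append_of_ne_nil _ (by simp [hR]), List.getLast_append_of_ne_nil _ hR]
      at hlast
    rw [← hQh, List.head_append_of_ne_nil hP] at hhead
    exact ⟨hhead, hlast.symm, hadj⟩
  · obtain ⟨P, Q, R, hP, hQ, hR, rfl, hPl, hQh, hQl, hRh⟩ :=
      exists_eq_append_append (show 0 < i + 1 by omega) (show i + 1 < j + 1 by omega) hj
    refine ⟨P, Q, R, hP, hQ, hR, rfl, .inr ?_⟩
    simp only [Nat.add_sub_cancel] at hQl hPl
    rw [← hQh, ← hRh] at hadj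
    rw [← hPl, List.getLast_append_of_ne_nil _ (by simp [hR]), List.getLast_append_of_ne_nil _ hR]
      at hlast
    rw [← hQl, List.head_append_of_ne_nil hP] at hhead
    exact ⟨hlast, hhead, hadj⟩

/-- The two rotations keep the edges inside the three pieces and exchange the three edges that close
them up to a cycle. -/
theorem IsExpander.exists_perm_cycleEdges_eq_add (hL : IsExpander L a) {l : List V}
    (hl : IsEnumeration l) (hne : l ≠ []) (hend : ¬ L.Adj (l.getLast hne) (l.head hne)) :
    ∃ l' : List V, l.Perm l' ∧ ∃ X F A : Multiset (Sym2 V), cycleEdges l = X + F ∧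
      cycleEdges l' = X + A ∧ s(l.getLast hne, l.head hne) ∈ F ∧ A.card = 3 ∧
      ∀ e ∈ A, e ∈ L.edgeSet := by
  obtain ⟨P, Q, R, hP, hQ, hR, rfl, ⟨h₁, h₂, h₃⟩ | ⟨h₁, h₂, h₃⟩⟩ :=
    hL.exists_splitting hl hne hend
  · have hperm : (P ++ (Q ++ R)).Perm (P.reverse ++ (Q ++ R.reverse)) :=
      P.reverse_perm.symm.append ((List.Perm.refl Q).append R.reverse_perm.symm)
    exact ⟨_, hperm, _, _, _, cycleEdges_append_append hP hQ hR,
      cycleEdges_reverse_append_append_reverse hP hQ hR, by simp [hP, hQ, hR], rfl,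
      by simp [h₁, h₂, h₃]⟩
  · have hperm : (P ++ (Q ++ R)).Perm (R ++ (P.reverse ++ Q.reverse)) := by
      rw [← List.append_assoc]
      exact List.perm_append_comm.trans
        ((List.Perm.refl R).append (P.reverse_perm.symm.append Q.reverse_perm.symm))
    exact ⟨_, hperm, _, _, _, cycleEdges_append_append hP hQ hR,
      cycleEdges_append_reverse_append_reverse hP hQ hR, by simp [hP, hQ, hR], rfl,
      by simp [h₁, h₂, h₃]⟩

/-- The number of edges of the closed-up list `l` missing from `L`. -/
noncomputable def missing (L : SimpleGraph V) (l : List V) : ℕ :=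
  (cycleEdges l).countP (· ∉ L.edgeSet)

theorem IsExpander.exists_missing_lt (hL : IsExpander L a) {l : List V} (hl : IsEnumeration l)
    (hf : 0 < missing L l) :
    ∃ l' : List V, IsEnumeration l' ∧ missing L l' < missing L l ∧
      ∃ A : Multiset (Sym2 V), A.card = 3 ∧ cycleEdges l' ≤ cycleEdges l + A := by
  obtain ⟨e, he, heL⟩ := Multiset.countP_pos.1 hf
  obtain ⟨l₀, hne, hperm, hedges, rfl⟩ := exists_perm_of_mem_cycleEdges he
  obtain ⟨l', hperm', X, F, A, hF, hA, heF, hcard, hAL⟩ :=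
    hL.exists_perm_cycleEdges_eq_add (hl.perm hperm) hne heL
  refine ⟨l', hl.perm (hperm.trans hperm'), ?_, A, hcard, ?_⟩
  · have hFpos : 0 < F.countP (· ∉ L.edgeSet) := Multiset.countP_pos_of_mem heF heL
    have hAzero : A.countP (· ∉ L.edgeSet) = 0 :=
      Multiset.countP_eq_zero.2 fun e he ↦ not_not.2 (hAL e he)
    rw [missing, missing, ← hedges, hF, hA, Multiset.countP_add, Multiset.countP_add]
    omega
  · rw [← hedges, hF, hA]
    gcongr
    exact Multiset.le_add_right X F

theorem IsExpander.exists_forall_mem_edgeSet (hL : IsExpander L a) {l : List V}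
    (hl : IsEnumeration l) :
    ∃ l' : List V, IsEnumeration l' ∧ (∀ e ∈ cycleEdges l', e ∈ L.edgeSet) ∧
      ∃ A : Multiset (Sym2 V), A.card ≤ 3 * missing L l ∧
        cycleEdges l' ≤ cycleEdges l + A := by
  induction hf : missing L l using Nat.strong_induction_on generalizing l with
  | h f ih =>
    obtain rfl | hpos := f.eq_zero_or_pos
    · refine ⟨l, hl, fun e he ↦ not_not.1 (Multiset.countP_eq_zero.1 hf e he), 0, by simp, by simp⟩
    obtain ⟨l₁, hl₁, hlt, A₁, hA₁, hle₁⟩ := hL.exists_missing_lt hl (hf ▸ hpos)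
    obtain ⟨l', hl', hL', A, hA, hle⟩ := ih _ (hf ▸ hlt) hl₁ rfl
    refine ⟨l', hl', hL', A₁ + A, by rw [Multiset.card_add]; omega, ?_⟩
    calc
      cycleEdges l' ≤ cycleEdges l₁ + A := hle
      _ ≤ cycleEdges l + A₁ + A := by gcongr
      _ = cycleEdges l + (A₁ + A) := add_assoc ..

end Rotation

section SequentialCompletion

variable {V J : Type*} {G H : SimpleGraph V} {a : ℕ}

theorem pairwise_onFun_update {β : Type*} {r : β → β → Prop} (hr : ∀ ⦃b c⦄, r b c → r c b)
    {f : J → β} (hf : Pairwise (Function.onFun r f)) {j : J} {b : β} (hb : ∀ i ≠ j, r (f i) b) :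
    Pairwise (Function.onFun r (Function.update f j b)) := by
  intro i i' hii'
  obtain rfl | hi := eq_or_ne i j
  · simpa [Function.onFun, Function.update_of_ne hii'.symm] using hr (hb i' hii'.symm)
  obtain rfl | hi' := eq_or_ne i' j
  · simpa [Function.onFun, Function.update_of_ne hi] using hb i hi
  · simpa [Function.onFun, Function.update_of_ne hi, Function.update_of_ne hi'] using hf hii'

theorem countP_le_countP_of_imp {β : Type*} {p q : β → Prop} {_ : DecidablePred p}
    {_ : DecidablePred q} {M : Multiset β} (h : ∀ x ∈ M, p x → q x) : M.countP p ≤ M.countP q := by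
  rw [Multiset.countP_eq_card_filter, Multiset.countP_eq_card_filter]
  refine Multiset.card_le_card (Multiset.le_filter.2 ⟨Multiset.filter_le _ _, fun x hx ↦ ?_⟩)
  exact h x (Multiset.mem_of_mem_filter hx) (Multiset.of_mem_filter hx)

theorem card_interedges_le_card_of_disjoint {S T : Finset V} (hST : Disjoint S T)
    {U : Finset (Sym2 V)} (hU : ∀ x ∈ S, ∀ y ∈ T, H.Adj x y → s(x, y) ∈ U) :
    #(Rel.interedges H.Adj S T) ≤ #{e ∈ U | e ∈ H.edgeSet} := by
  refine card_le_card_of_injOn (fun e ↦ s(e.1, e.2)) ?_ (injOn_mk_interedges H.Adj hST)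
  rintro ⟨x, y⟩ hxy
  obtain ⟨hx, hy, hxy⟩ := Rel.mk_mem_interedges_iff.1 (mem_coe.1 hxy)
  exact mem_coe.2 (mem_filter.2 ⟨hU x hx y hy hxy, hxy⟩)

variable [Fintype V]

theorem isExpander_deleteEdges (hHG : H ≤ G) {U : Finset (Sym2 V)} {d : ℕ}
    (hd : ∀ v, #{w | s(v, w) ∈ U} ≤ d) (hG : ∀ v, 2 * a + d ≤ #{w | G.Adj v w})
    (hH : ∀ S T : Finset V, Disjoint S T → a ≤ #S → a ≤ #T →
      #{e ∈ U | e ∈ H.edgeSet} < #(Rel.interedges H.Adj S T)) :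
    IsExpander (G.deleteEdges U) a where
  two_mul_le_degree v := by
    have hsub : ({w | G.Adj v w} : Finset V) ⊆
        ({w | (G.deleteEdges U).Adj v w} : Finset V) ∪ ({w | s(v, w) ∈ U} : Finset V) := fun w ↦ by
      simp only [mem_filter_univ, mem_union, SimpleGraph.deleteEdges_adj, mem_coe]
      tauto
    have := (card_le_card hsub).trans (card_union_le _ _)
    have := hG v
    have := hd v
    have : 2 * a ≤ #{w | (G.deleteEdges U).Adj v w} := by omega
    convert this
  exists_adj S T hST hS hT := by
    by_contra! hno
    refine (hH S T hST hS hT).not_ge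
      (card_interedges_le_card_of_disjoint hST fun x hx y hy hxy ↦ ?_)
    by_contra hU
    exact hno x hx y hy (SimpleGraph.deleteEdges_adj.2 ⟨hHG hxy, by simpa using hU⟩)

variable (G H) in
/-- A stage of the sequential completion: the edge sets `E j` with `j ∈ s` are Hamilton cycles
of `G`, while the other `E j` are the initial edge sets `P j`. The sets are disjoint, have maximum
degree two, and use at most `4 * p` edges of the reserve `H` each. -/
structure IsPartialPacking (P : J → Finset (Sym2 V)) (p : ℕ) (s : Finset J)
    (E : J → Finset (Sym2 V)) : Prop where
  card_filter_mk_mem_le : ∀ j v, #{w | s(v, w) ∈ E j} ≤ 2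
  card_filter_mem_le : ∀ j, #{e ∈ E j | e ∈ H.edgeSet} ≤ 4 * p
  disjoint : Pairwise (Function.onFun Disjoint E)
  eq_of_notMem : ∀ j ∉ s, E j = P j
  exists_enumeration : ∀ j ∈ s, ∃ l, IsEnumeration l ∧ (∀ e ∈ cycleEdges l, e ∈ G.edgeSet) ∧
    E j = (cycleEdges l).toFinset

theorem IsPartialPacking.update {P : J → Finset (Sym2 V)} {p : ℕ} {s : Finset J}
    {E : J → Finset (Sym2 V)} (hE : IsPartialPacking G H P p s E) (j : J) {l : List V}
    (hl : IsEnumeration l) (hG : ∀ e ∈ cycleEdges l, e ∈ G.edgeSet)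
    (hEl : ∀ i ≠ j, Disjoint (E i) (cycleEdges l).toFinset)
    (hHl : (cycleEdges l).countP (· ∈ H.edgeSet) ≤ 4 * p) :
    IsPartialPacking G H P p (insert j s) (Function.update E j (cycleEdges l).toFinset) where
  card_filter_mk_mem_le := by
    refine (Function.forall_update_iff E fun _ A ↦ ∀ v, #{w | s(v, w) ∈ A} ≤ 2).2
      ⟨fun v ↦ ?_, fun i _ ↦ hE.card_filter_mk_mem_le i⟩
    simpa only [Multiset.mem_toFinset] using hl.card_filter_mk_mem_cycleEdges_le v
  card_filter_mem_le := by
    refine (Function.forall_update_iff E fun _ A ↦ #{e ∈ A | e ∈ H.edgeSet} ≤ 4 * p).2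
      ⟨?_, fun i _ ↦ hE.card_filter_mem_le i⟩
    rw [Multiset.countP_eq_card_filter] at hHl
    rw [← Multiset.toFinset_filter]
    exact (Multiset.toFinset_card_le _).trans hHl
  disjoint := pairwise_onFun_update (fun _ _ h ↦ h.symm) hE.disjoint hEl
  eq_of_notMem i hi := by
    rw [mem_insert, not_or] at hi
    rw [Function.update_of_ne hi.1, hE.eq_of_notMem i hi.2]
  exists_enumeration i hi := by
    obtain rfl | hij := eq_or_ne i j
    · exact ⟨l, hl, hG, Function.update_self ..⟩
    · rw [Function.update_of_ne hij]
      exact hE.exists_enumeration i (mem_of_mem_insert_of_ne hi hij)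

theorem IsPartialPacking.isExpander_deleteEdges [Fintype J] {P : J → Finset (Sym2 V)} {p : ℕ}
    {s : Finset J} {E : J → Finset (Sym2 V)} (hE : IsPartialPacking G H P p s E) (hHG : H ≤ G)
    (hG : ∀ v, 2 * a + 2 * Fintype.card J ≤ #{w | G.Adj v w})
    (hH : ∀ S T : Finset V, Disjoint S T → a ≤ #S → a ≤ #T →
      4 * p * Fintype.card J < #(Rel.interedges H.Adj S T)) (t : Finset J) :
    IsExpander (G.deleteEdges (t.biUnion E)) a := by
  refine HamiltonPacking.isExpander_deleteEdges hHG (fun v ↦ ?_) hG fun S T hST hS hT ↦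
    lt_of_le_of_lt ?_ (hH S T hST hS hT)
  · have : ({w | s(v, w) ∈ t.biUnion E} : Finset V) = t.biUnion fun i ↦ {w | s(v, w) ∈ E i} := by
      ext; simp
    rw [this, mul_comm]
    exact (card_biUnion_le_card_mul _ _ _ fun i _ ↦ hE.card_filter_mk_mem_le i v).trans
      (Nat.mul_le_mul_right 2 (card_le_univ t))
  · rw [filter_biUnion, mul_comm]
    exact (card_biUnion_le_card_mul _ _ _ fun i _ ↦ hE.card_filter_mem_le i).trans
      (Nat.mul_le_mul_right _ (card_le_univ t))

theorem IsPartialPacking.exists_insert [Fintype J] {P : J → Finset (Sym2 V)} {p : ℕ}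
    {s : Finset J} {E : J → Finset (Sym2 V)} (hE : IsPartialPacking G H P p s E) (hHG : H ≤ G)
    (hG : ∀ v, 2 * a + 2 * Fintype.card J ≤ #{w | G.Adj v w})
    (hH : ∀ S T : Finset V, Disjoint S T → a ≤ #S → a ≤ #T →
      4 * p * Fintype.card J < #(Rel.interedges H.Adj S T))
    {j : J} (hj : j ∉ s) (hPG : ∀ e ∈ P j, e ∈ G.edgeSet) (hPH : ∀ e ∈ P j, e ∉ H.edgeSet)
    {l : List V} (hl : IsEnumeration l) (hcost : (cycleEdges l).countP (· ∉ P j) ≤ p) :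
    ∃ E', IsPartialPacking G H P p (insert j s) E' := by
  set U : Finset (Sym2 V) := (univ.erase j).biUnion E
  have hLU : ∀ e, e ∈ (G.deleteEdges (U : Set (Sym2 V))).edgeSet ↔ e ∈ G.edgeSet ∧ e ∉ U := by
    simp [SimpleGraph.edgeSet_deleteEdges]
  have hEU : ∀ i ≠ j, E i ⊆ U := fun i hi ↦ subset_biUnion_of_mem E (by simp [hi])
  have hPU : ∀ e ∈ P j, e ∉ U := fun e he heU ↦ by
    obtain ⟨i, hi, hei⟩ := mem_biUnion.1 heU
    exact disjoint_left.1 (hE.disjoint (ne_of_mem_erase hi)) hei (hE.eq_of_notMem j hj ▸ he)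
  have hmissing : missing (G.deleteEdges U) l ≤ p := by
    refine le_trans (countP_le_countP_of_imp fun e _ he heP ↦ ?_) hcost
    exact he ((hLU e).2 ⟨hPG e heP, hPU e heP⟩)
  obtain ⟨l', hl', hL, A, hA, hle⟩ :=
    (hE.isExpander_deleteEdges hHG hG hH (univ.erase j)).exists_forall_mem_edgeSet hl
  refine ⟨_, hE.update j hl' (fun e he ↦ ((hLU e).1 (hL e he)).1) (fun i hi ↦ ?_) ?_⟩
  · exact disjoint_left.2 fun e he he' ↦
      ((hLU e).1 (hL e (Multiset.mem_toFinset.1 he'))).2 (hEU i hi he)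
  · have hlH : (cycleEdges l).countP (· ∈ H.edgeSet) ≤ p :=
      (countP_le_countP_of_imp (q := (· ∉ P j)) fun e _ he heP ↦
        hPH e heP he).trans hcost
    calc
      (cycleEdges l').countP (· ∈ H.edgeSet)
        ≤ (cycleEdges l + A).countP (· ∈ H.edgeSet) := Multiset.countP_le_of_le _ hle
      _ = (cycleEdges l).countP (· ∈ H.edgeSet) + A.countP (· ∈ H.edgeSet) :=
        Multiset.countP_add ..
      _ ≤ p + A.card := by gcongr; exact Multiset.countP_le_card _ _
      _ ≤ p + 3 * p := by gcongr; exact hA.trans (Nat.mul_le_mul_left 3 hmissing)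
      _ = 4 * p := by ring

/-- Completes the initial edge sets `P j` to disjoint Hamilton cycles one after the other, the
reserve `H` having more edges between large sets than all the cycles together use. -/
theorem exists_pairwise_disjoint_cycleEdges [Fintype J] (hHG : H ≤ G)
    (hG : ∀ v, 2 * a + 2 * Fintype.card J ≤ #{w | G.Adj v w}) {p : ℕ}
    (hH : ∀ S T : Finset V, Disjoint S T → a ≤ #S → a ≤ #T →
      4 * p * Fintype.card J < #(Rel.interedges H.Adj S T))
    {P : J → Finset (Sym2 V)} (hP : Pairwise (Function.onFun Disjoint P))
    (hPG : ∀ j, ∀ e ∈ P j, e ∈ G.edgeSet) (hPH : ∀ j, ∀ e ∈ P j, e ∉ H.edgeSet)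
    {l : J → List V} (hl : ∀ j, IsEnumeration (l j)) (hPl : ∀ j, ∀ e ∈ P j, e ∈ cycleEdges (l j))
    (hcost : ∀ j, (cycleEdges (l j)).countP (· ∉ P j) ≤ p) :
    ∃ C : J → List V, (∀ j, IsEnumeration (C j)) ∧
      (∀ j, ∀ e ∈ cycleEdges (C j), e ∈ G.edgeSet) ∧
      Pairwise (Function.onFun Disjoint fun j ↦ (cycleEdges (C j)).toFinset) := by
  have hstart : IsPartialPacking G H P p ∅ P :=
    { card_filter_mk_mem_le j v := (card_le_card fun w hw ↦ by
        simp only [mem_filter_univ] at hw ⊢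
        exact hPl j _ hw).trans ((hl j).card_filter_mk_mem_cycleEdges_le v)
      card_filter_mem_le j := by simp [filter_false_of_mem (hPH j)]
      disjoint := hP
      eq_of_notMem _ _ := rfl
      exists_enumeration := by simp }
  have hstage (s : Finset J) : ∃ E, IsPartialPacking G H P p s E := by
    induction s using Finset.induction_on with
    | empty => exact ⟨P, hstart⟩
    | insert j s hj ih =>
      obtain ⟨E, hE⟩ := ih
      exact hE.exists_insert hHG hG hH hj (hPG j) (hPH j) (hl j) (hcost j)
  obtain ⟨E, hE⟩ := hstage univ
  choose C hC hCG hEC using fun j ↦ hE.exists_enumeration j (mem_univ j)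
  exact ⟨C, hC, hCG, funext hEC ▸ hE.disjoint⟩

end SequentialCompletion

section RandomSplitting

theorem exists_set_forall_abs_card_sub_le {ι J : Type*} [Finite ι] [Fintype J] (p : unitInterval)
    (s : J → Finset ι) {N r : J → ℝ} (hN : ∀ j, #(s j) ≤ N j) (hr : ∀ j, 0 ≤ r j)
    (hsum : ∑ j, 2 * Real.exp (-2 * r j ^ 2 / N j) < 1) :
    ∃ F : Set ι, ∀ j, |(#{i ∈ s j | i ∈ F} : ℝ) - p * #(s j)| ≤ r j := by
  obtain ⟨f, hf⟩ := exists_forall_abs_card_sub_le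
    (ProbabilityTheory.bernoulliMeasure True False p) s
    (A := fun _ _ ↦ {c | c}) (fun _ _ ↦ MeasurableSet.of_discrete) hN hr hsum
  refine ⟨{i | f i}, fun j ↦ ?_⟩
  have hp : (ProbabilityTheory.bernoulliMeasure True False p).real {c | c} = p := by
    simp
  simpa [hp, mul_comm] using hf j

variable {V J : Type*} (G : SimpleGraph V)

theorem card_image_mk_interedges {S T : Finset V} (hST : Disjoint S T) :
    #((Rel.interedges G.Adj S T).image fun e ↦ s(e.1, e.2)) = #(Rel.interedges G.Adj S T) :=
  card_image_of_injOn (injOn_mk_interedges G.Adj hST)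

theorem exists_le_abs_card_interedges_sub_le [Finite V] [Fintype J] (p : unitInterval)
    {S T : J → Finset V} (hST : ∀ j, Disjoint (S j) (T j)) {N r : J → ℝ}
    (hN : ∀ j, #(Rel.interedges G.Adj (S j) (T j)) ≤ N j) (hr : ∀ j, 0 ≤ r j)
    (hsum : ∑ j, 2 * Real.exp (-2 * r j ^ 2 / N j) < 1) :
    ∃ H ≤ G, ∀ j, |(#(Rel.interedges H.Adj (S j) (T j)) : ℝ) -
      p * #(Rel.interedges G.Adj (S j) (T j))| ≤ r j := by
  obtain ⟨F, hF⟩ := exists_set_forall_abs_card_sub_le p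
    (fun j ↦ (Rel.interedges G.Adj (S j) (T j)).image fun e ↦ s(e.1, e.2))
    (fun j ↦ (card_image_mk_interedges G (hST j)).symm ▸ hN j) hr hsum
  obtain ⟨H, hH⟩ : ∃ H : SimpleGraph V, ∀ x y, H.Adj x y ↔ G.Adj x y ∧ s(x, y) ∈ F :=
    ⟨G.deleteEdges Fᶜ, by simp⟩
  refine ⟨H, fun x y hxy ↦ ((hH x y).1 hxy).1, fun j ↦ ?_⟩
  have hcard : #{e ∈ (Rel.interedges G.Adj (S j) (T j)).image fun e ↦ s(e.1, e.2) | e ∈ F} =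
      #(Rel.interedges H.Adj (S j) (T j)) := by
    rw [filter_image, ← card_image_mk_interedges H (hST j)]
    congr 2
    ext ⟨x, y⟩
    simp only [mem_filter, Rel.mk_mem_interedges_iff, hH, and_assoc]
  have := hF j
  rwa [hcard, card_image_mk_interedges G (hST j)] at this

theorem card_interedges_sdiff {B H : SimpleGraph V} (hHG : H ≤ G) (hB : B = G \ H)
    (S T : Finset V) :
    #(Rel.interedges B.Adj S T) + #(Rel.interedges H.Adj S T) =
      #(Rel.interedges G.Adj S T) := by
  have hsplit := card_filter_add_card_filter_not (s := Rel.interedges G.Adj S T)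
    fun e ↦ H.Adj e.1 e.2
  rw [add_comm, ← hsplit]
  congr 2 <;> ext ⟨x, y⟩ <;>
    simp only [Rel.mk_mem_interedges_iff, mem_filter, hB, SimpleGraph.sdiff_adj, and_assoc]
  have := @hHG x y
  tauto

theorem card_interedges_singleton_compl [Fintype V] (v : V) :
    #(Rel.interedges G.Adj {v} {v}ᶜ) = #{w | G.Adj v w} := by
  rw [card_interedges_eq_sum_left, sum_singleton]
  congr 1
  ext w
  simpa using fun h : G.Adj v w ↦ h.ne'

theorem sum_exp_lt_one_of_le {n : ℕ} {ε : ℝ} (hε : 0 < ε) (hε1 : ε ≤ 1)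
    (hbig : 150 ≤ ε ^ 4 * n) :
    n * (2 * Real.exp (-(ε ^ 2 * n / 2))) + 4 ^ n * (2 * Real.exp (-(3 * n))) < 1 := by
  have hn : (150 : ℝ) ≤ n := hbig.trans (mul_le_of_le_one_left n.cast_nonneg
    (pow_le_one₀ hε.le hε1))
  have hquartic : 58 * n ^ 2 ≤ Real.exp (ε ^ 2 * n / 2) := calc
    58 * (n : ℝ) ^ 2 ≤ (150 * n) ^ 2 / 384 := by nlinarith [sq_nonneg (n : ℝ)]
    _ ≤ (ε ^ 4 * n * n) ^ 2 / 384 := by gcongr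
    _ = (ε ^ 2 * n / 2) ^ 4 / Nat.factorial 4 := by norm_num [Nat.factorial]; ring
    _ ≤ Real.exp (ε ^ 2 * n / 2) := Real.pow_div_factorial_le_exp _ (by positivity) 4
  have hsingle : n * (2 * Real.exp (-(ε ^ 2 * n / 2))) ≤ 1 / 4 := by
    rw [Real.exp_neg, ← mul_assoc, ← div_eq_mul_inv, div_le_iff₀ (Real.exp_pos _)]
    nlinarith
  have hexp : (4 : ℝ) * Real.exp (-3) ≤ 1 / 4 := by
    rw [Real.exp_neg, ← div_eq_mul_inv, div_le_iff₀ (Real.exp_pos _),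
      show (3 : ℝ) = 1 + 1 + 1 by norm_num, Real.exp_add, Real.exp_add]
    nlinarith [Real.exp_one_gt_d9, mul_pos (Real.exp_pos 1) (Real.exp_pos 1)]
  have hpair : (4 : ℝ) ^ n * (2 * Real.exp (-(3 * n))) ≤ 1 / 2 := calc
    (4 : ℝ) ^ n * (2 * Real.exp (-(3 * n))) = 2 * (4 * Real.exp (-3)) ^ n := by
      rw [mul_pow, ← Real.exp_nat_mul]; ring_nf
    _ ≤ 2 * (1 / 4) ^ n := by gcongr
    _ ≤ 2 * (1 / 4) ^ 1 := by
      gcongr 2 * ?_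
      exact pow_le_pow_of_le_one (by norm_num) (by norm_num)
        (Nat.one_le_iff_ne_zero.2 (by rintro rfl; norm_num at hn))
    _ = 1 / 2 := by norm_num
  linarith

variable [Fintype V] {n : ℕ} {β ε : ℝ}

variable (V) in
/-- The pairs of disjoint sets of at least `δ` vertices. -/
abbrev LargePair (δ : ℝ) : Type _ :=
  {q : Finset V × Finset V // Disjoint q.1 q.2 ∧ δ ≤ #q.1 ∧ δ ≤ #q.2}

theorem sum_exp_largePair_le (hn : Fintype.card V = n) (hε : 0 < ε) (hbig : 150 ≤ ε ^ 4 * n) :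
    ∑ q : LargePair V (ε * n), 2 * Real.exp (-2 * (ε / 10 * (#q.1.1 * #q.1.2)) ^ 2 /
      (#q.1.1 * #q.1.2)) ≤ 4 ^ n * (2 * Real.exp (-(3 * n))) := by
  have hcard : (Fintype.card (LargePair V (ε * n)) : ℝ) ≤ 4 ^ n := by
    have : Fintype.card (LargePair V (ε * n)) ≤ 2 ^ n * 2 ^ n := by
      simpa [hn] using Fintype.card_subtype_le
        fun q : Finset V × Finset V ↦ Disjoint q.1 q.2 ∧ ε * n ≤ #q.1 ∧ ε * n ≤ #q.2
    rw [← mul_pow] at this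
    exact_mod_cast this
  have hterm (q : LargePair V (ε * n)) : 2 * Real.exp (-2 * (ε / 10 * (#q.1.1 * #q.1.2)) ^ 2 /
      (#q.1.1 * #q.1.2)) ≤ 2 * Real.exp (-(3 * n)) := by
    obtain ⟨⟨S, T⟩, -, hS, hT⟩ := q
    have hprod : 3 * n ≤ ε ^ 2 / 50 * (#S * #T : ℝ) := calc
      (3 : ℝ) * n ≤ ε ^ 4 * n / 50 * n := by gcongr; linarith
      _ = ε ^ 2 / 50 * (ε * n * (ε * n)) := by ring
      _ ≤ ε ^ 2 / 50 * (#S * #T) := by gcongr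
    gcongr
    have hquot (x : ℝ) : -2 * (ε / 10 * x) ^ 2 / x = -(ε ^ 2 / 50 * x) := by
      obtain rfl | hx := eq_or_ne x 0
      · simp
      · field_simp; norm_num
    rw [hquot]
    linarith
  calc
    _ ≤ Fintype.card (LargePair V (ε * n)) • (2 * Real.exp (-(3 * n))) :=
      sum_le_card_nsmul _ _ _ fun q _ ↦ hterm q
    _ ≤ 4 ^ n * (2 * Real.exp (-(3 * n))) := by
      rw [nsmul_eq_mul]; gcongr

theorem exists_le_abs_sub_le_and_abs_sub_le (hn : Fintype.card V = n) (hε : 0 < ε) (hε1 : ε ≤ 1)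
    (hbig : 150 ≤ ε ^ 4 * n) (p : unitInterval) :
    ∃ H ≤ G, (∀ v, |(#{w | H.Adj v w} : ℝ) - p * #{w | G.Adj v w}| ≤ ε / 2 * n) ∧
      ∀ S T : Finset V, Disjoint S T → ε * n ≤ #S → ε * n ≤ #T →
        |(#(Rel.interedges H.Adj S T) : ℝ) - p * #(Rel.interedges G.Adj S T)| ≤
          ε / 10 * (#S * #T) := by
  obtain ⟨H, hHG, hH⟩ : ∃ H ≤ G, ∀ j : V ⊕ LargePair V (ε * n), _ :=
    exists_le_abs_card_interedges_sub_le G p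
      (S := Sum.elim (fun v ↦ {v}) fun q ↦ q.1.1) (T := Sum.elim (fun v ↦ {v}ᶜ) fun q ↦ q.1.2)
      (N := Sum.elim (fun _ ↦ n) fun q ↦ #q.1.1 * #q.1.2)
      (r := Sum.elim (fun _ ↦ ε / 2 * n) fun q ↦ ε / 10 * (#q.1.1 * #q.1.2))
      (Sum.rec (fun _ ↦ disjoint_compl_right) fun q ↦ q.2.1)
      (by
        rintro (v | q)
        · simpa only [Sum.elim_inl, card_interedges_singleton_compl, ← hn] using
            Nat.cast_le.2 (card_le_univ _)
        · simp only [Sum.elim_inr]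
          rw [← Nat.cast_mul, Nat.cast_le]
          exact Rel.card_interedges_le_mul G.Adj q.1.1 q.1.2)
      (Sum.rec (fun _ ↦ by simp only [Sum.elim_inl]; positivity)
        fun _ ↦ by simp only [Sum.elim_inr]; positivity)
      (by
        have hquot : -2 * (ε / 2 * n) ^ 2 / n = -(ε ^ 2 * n / 2) := by
          field_simp
        refine lt_of_le_of_lt ?_ (sum_exp_lt_one_of_le hε hε1 hbig)
        rw [Fintype.sum_sum_type]
        gcongr ?_ + ?_
        · simp only [Sum.elim_inl, hquot, sum_const, card_univ, hn, nsmul_eq_mul, le_refl]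
        · exact sum_exp_largePair_le hn hε hbig)
  refine ⟨H, hHG, fun v ↦ ?_, fun S T hST hS hT ↦ hH (.inr ⟨(S, T), hST, hS, hT⟩)⟩
  simpa only [Sum.elim_inl, card_interedges_singleton_compl] using hH (.inl v)

/-- Keeps every edge in the reserve `H` independently with probability `p`. -/
theorem exists_reserve (hn : Fintype.card V = n) (hε : 0 < ε) (hε1 : ε ≤ 1)
    (hbig : 150 ≤ ε ^ 4 * n) (p : unitInterval) (hdeg : ∀ v, β * n ≤ #{w | G.Adj v w})
    (hG : IsPairDense G β (ε * n)) :
    ∃ B ≤ G, ∃ H ≤ G, Disjoint B H ∧ (∀ v, ((1 - p) * β - ε / 2) * n ≤ #{w | B.Adj v w}) ∧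
      IsPairDense B ((1 - p) * β - ε / 10) (ε * n) ∧
      IsPairDense H (p * β - ε / 10) (ε * n) := by
  obtain ⟨H, hHG, hdegH, hH⟩ := exists_le_abs_sub_le_and_abs_sub_le G hn hε hε1 hbig p
  have hp := p.2.1
  have hp' := sub_nonneg.2 p.2.2
  obtain ⟨B, hB⟩ : ∃ B, B = G \ H := ⟨_, rfl⟩
  refine ⟨B, hB ▸ sdiff_le, H, hHG, hB ▸ disjoint_sdiff_self_left, fun v ↦ ?_,
    fun S T hST hS hT ↦ ?_, fun S T hST hS hT ↦ ?_⟩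
  · have hsplit : (#{w | B.Adj v w} + #{w | H.Adj v w} : ℝ) = #{w | G.Adj v w} := by
      simp only [← card_interedges_singleton_compl]
      exact_mod_cast card_interedges_sdiff G hHG hB {v} {v}ᶜ
    have := (abs_le.1 (hdegH v)).2
    nlinarith [mul_le_mul_of_nonneg_left (hdeg v) hp']
  · have hsplit : (#(Rel.interedges B.Adj S T) + #(Rel.interedges H.Adj S T) : ℝ) =
        #(Rel.interedges G.Adj S T) := by
      exact_mod_cast card_interedges_sdiff G hHG hB S T
    have := (abs_le.1 (hH S T hST hS hT)).2
    nlinarith [mul_le_mul_of_nonneg_left (hG hST hS hT) hp']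
  · have := (abs_le.1 (hH S T hST hS hT)).1
    nlinarith [mul_le_mul_of_nonneg_left (hG hST hS hT) hp]

end RandomSplitting

section Equipartition

variable {α V : Type*} [Fintype α] [Fintype V]

theorem abs_card_filter_mem_sub_le (φ : α ↪ V) (Y : Finset V) {ρ : ℕ}
    (hρ : Fintype.card V = Fintype.card α + ρ) :
    |(#{x | φ x ∈ Y} : ℝ) - #Y| ≤ ρ := by
  have hle : #{x | φ x ∈ Y} ≤ #Y :=
    card_le_card_of_injOn φ (fun x hx ↦ by simpa using hx) φ.injective.injOn
  have hge : #Y ≤ #{x | φ x ∈ Y} + ρ := by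
    have hcover : Y ⊆ ({x | φ x ∈ Y} : Finset α).map φ ∪ (univ.map φ)ᶜ := by
      intro y hy
      by_cases hrange : ∃ x, φ x = y
      · obtain ⟨x, rfl⟩ := hrange
        simp [hy]
      · simpa using Or.inr hrange
    have h := (card_le_card hcover).trans (card_union_le _ _)
    rw [card_compl, card_map, card_map, card_univ, hρ, Nat.add_sub_cancel_left] at h
    exact h
  rw [abs_le]
  constructor
  · have : (#Y : ℝ) ≤ #{x | φ x ∈ Y} + ρ := by exact_mod_cast hge
    linarith
  · have : (#{x | φ x ∈ Y} : ℝ) ≤ #Y := by exact_mod_cast hle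
    linarith [ρ.cast_nonneg (α := ℝ)]

theorem sum_uniformOn_real_add_left {G : Type*} [AddGroup G] [Fintype G] [MeasurableSpace G]
    [MeasurableSingletonClass G] (P : α → G → Prop) (g : G) :
    ∑ x, (ProbabilityTheory.uniformOn (Set.univ : Set G)).real {c | P x (g + c)} =
      (#{q : α × G | P q.1 q.2} : ℝ) / Fintype.card G := by
  have hprob (x : α) : (ProbabilityTheory.uniformOn (Set.univ : Set G)).real {c | P x (g + c)} =
      (#{c | P x (g + c)} : ℝ) / Fintype.card G := by
    rw [MeasureTheory.measureReal_def, ProbabilityTheory.uniformOn_univ, ← Finset.coe_filter_univ,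
      MeasureTheory.Measure.count_apply_finset]
    simp
  simp_rw [hprob, ← sum_div]
  congr 1
  simp_rw [← Finset.sum_boole, Fintype.sum_prod_type]
  exact sum_congr rfl fun x _ ↦
    Equiv.sum_comp (Equiv.addLeft g) fun c ↦ if P x c then (1 : ℝ) else 0

theorem exists_equipartition {J : Type*} [Fintype J] {k m ρ : ℕ} [NeZero k]
    (hV : Fintype.card V = k * m + ρ) (Y : J → Finset V) {t : ℝ} (ht : 0 ≤ t)
    (hsum : 2 * (Fintype.card J * k) * Real.exp (-2 * t ^ 2 / m) < 1) :
    ∃ ψ : ZMod k → Fin m → V, Function.Injective (Function.uncurry ψ) ∧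
      ∀ i j, |(#{x | ψ i x ∈ Y j} : ℝ) - #(Y j) / k| ≤ t + ρ / k := by
  have hcard : Fintype.card V = Fintype.card (Fin m × ZMod k) + ρ := by
    simp [hV, mul_comm]
  obtain ⟨φ⟩ : Nonempty (Fin m × ZMod k ↪ V) :=
    Function.Embedding.nonempty_of_card_le (by omega)
  let _ : MeasurableSpace (ZMod k) := ⊤
  have hmeas (A : Set (ZMod k)) : MeasurableSet A := trivial
  -- Row `x` of `φ` is rotated by an independent uniform amount `f x`.
  obtain ⟨f, hf⟩ := exists_forall_abs_card_sub_le
    (ProbabilityTheory.uniformOn (Set.univ : Set (ZMod k)))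
    (J := J × ZMod k) (fun _ ↦ (univ : Finset (Fin m)))
    (A := fun j x ↦ {c | φ (x, j.2 + c) ∈ Y j.1}) (fun _ _ ↦ hmeas _)
    (N := fun _ ↦ m) (r := fun _ ↦ t) (by simp) (fun _ ↦ ht) (by
      rw [sum_const, card_univ, Fintype.card_prod, ZMod.card, nsmul_eq_mul]
      push_cast
      linarith)
  refine ⟨fun i x ↦ φ (x, i + f x), fun ⟨i, x⟩ ⟨i', x'⟩ h ↦ ?_, fun i j ↦ ?_⟩
  · obtain ⟨rfl, h⟩ := Prod.mk.inj (φ.injective h)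
    exact Prod.ext (add_right_cancel h) rfl
  have hdev := hf (j, i)
  simp only [Set.mem_ofPred_eq, sum_uniformOn_real_add_left (fun x c ↦ φ (x, c) ∈ Y j),
    ZMod.card, Prod.mk.eta] at hdev
  have hrest : |(#{q | φ q ∈ Y j} : ℝ) / k - #(Y j) / k| ≤ ρ / k := by
    rw [← sub_div, abs_div, Nat.abs_cast]
    gcongr
    exact abs_card_filter_mem_sub_le φ (Y j) hcard
  exact (abs_sub_le _ _ _).trans (add_le_add hdev hrest)

end Equipartition

section AlmostRegular

variable {X Y : Type*}

theorem card_le_two_mul_card_filter_card_le (Q : X → Y → Prop) {d : ℝ} (hd : 0 < d)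
    {S : Finset X} {T : Finset Y} (h : #(Rel.interedges Q S T) < d * #S / 2) :
    (#S : ℝ) ≤ 2 * #{x ∈ S | (#{y ∈ T | Q x y} : ℝ) ≤ d} := by
  have hsplit : (#{x ∈ S | (#{y ∈ T | Q x y} : ℝ) ≤ d} : ℝ) +
      #{x ∈ S | ¬(#{y ∈ T | Q x y} : ℝ) ≤ d} = #S := by
    exact_mod_cast card_filter_add_card_filter_not _
  have hhigh : d * #{x ∈ S | ¬(#{y ∈ T | Q x y} : ℝ) ≤ d} ≤ #(Rel.interedges Q S T) := calc
    d * #{x ∈ S | ¬(#{y ∈ T | Q x y} : ℝ) ≤ d} ≤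
        ∑ x ∈ S with ¬(#{y ∈ T | Q x y} : ℝ) ≤ d, (#{y ∈ T | Q x y} : ℝ) := by
      rw [mul_comm, ← nsmul_eq_mul]
      exact card_nsmul_le_sum _ _ _ fun x hx ↦ (not_le.1 (mem_filter.1 hx).2).le
    _ ≤ ∑ x ∈ S, (#{y ∈ T | Q x y} : ℝ) :=
      sum_le_sum_of_subset_of_nonneg (filter_subset _ _) fun _ _ _ ↦ Nat.cast_nonneg _
    _ = #(Rel.interedges Q S T) := by rw [card_interedges_eq_sum_left, Nat.cast_sum]
  nlinarith

variable [Fintype X] [Fintype Y] {m : ℕ} {Q R : X → Y → Prop} {d θ A D : ℝ}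

theorem mul_sub_mul_le_card_interedges (hY : Fintype.card Y = m) (hRQ : ∀ x y, R x y → Q x y)
    (hrow : ∀ x, d - θ ≤ #{y | R x y}) (hcol : ∀ y, #{x | R x y} ≤ d + θ)
    (S : Finset X) (T : Finset Y) :
    (d - θ) * #S - (d + θ) * (m - #T) ≤ #(Rel.interedges Q S T) := by
  have hsplit : (#(Rel.interedges R S T) : ℝ) + #(Rel.interedges R S Tᶜ) =
      #(Rel.interedges R S univ) := by
    simp_rw [card_interedges_eq_sum_right]
    exact_mod_cast sum_add_sum_compl T _
  have hall : (d - θ) * #S ≤ #(Rel.interedges R S univ) := by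
    rw [card_interedges_eq_sum_left, Nat.cast_sum, mul_comm, ← nsmul_eq_mul]
    exact card_nsmul_le_sum _ _ _ fun x _ ↦ hrow x
  have hcompl : (#(Rel.interedges R S Tᶜ) : ℝ) ≤ (d + θ) * (m - #T) := by
    rw [card_interedges_eq_sum_right, Nat.cast_sum, mul_comm, ← hY,
      ← Nat.cast_sub (card_le_univ T), ← card_compl, ← nsmul_eq_mul]
    refine sum_le_card_nsmul _ _ _ fun y _ ↦ le_trans ?_ (hcol y)
    exact_mod_cast card_le_card (filter_subset_filter _ (subset_univ S))
  have hmono : (#(Rel.interedges R S T) : ℝ) ≤ #(Rel.interedges Q S T) := by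
    exact_mod_cast card_interedges_mono hRQ S T
  linarith

/-- When `#S` is much larger than the complement of `T` the degrees of `R` suffice; otherwise the
right side only has to beat a small multiple of `#S`. -/
theorem mul_add_sub_le_card_interedges_of_expanding (hY : Fintype.card Y = m)
    (hRQ : ∀ x y, R x y → Q x y) (hθ : 0 ≤ θ) (hD0 : 0 ≤ D) (hD : D ≤ d - 1024 * θ)
    (hDA : D ≤ A) (hA : 9 / 10 * A ≤ d - θ)
    (hrow : ∀ x, d - θ ≤ #{y | R x y}) (hcol : ∀ y, #{x | R x y} ≤ d + θ)
    (hexp : ∀ (S : Finset X) (T : Finset Y), A / 4 ≤ #S → (m : ℝ) / 2 ≤ #T →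
      A / 256 * #S ≤ #(Rel.interedges Q S T))
    (S : Finset X) {T : Finset Y} (hT : (m : ℝ) / 2 ≤ #T) :
    D * (#S + #T - m) ≤ #(Rel.interedges Q S T) := by
  have hTm : (#T : ℝ) ≤ m := by exact_mod_cast hY ▸ card_le_univ T
  have hS0 : (0 : ℝ) ≤ #S := Nat.cast_nonneg _
  obtain hu | hu := le_total ((#S : ℝ) + #T) m
  · exact (mul_nonpos_of_nonneg_of_nonpos hD0 (by linarith)).trans (Nat.cast_nonneg _)
  obtain hlarge | hsmall :=
    le_total (#S + (m - #T) : ℝ) (1024 * (#S + #T - m))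
  · refine le_trans ?_ (mul_sub_mul_le_card_interedges hY hRQ hrow hcol S T)
    calc
      D * (#S + #T - m) ≤ (d - 1024 * θ) * (#S + #T - m) := by gcongr
      _ = d * (#S + #T - m) - θ * (1024 * (#S + #T - m)) := by ring
      _ ≤ d * (#S + #T - m) - θ * (#S + (m - #T)) := by gcongr
      _ = (d - θ) * #S - (d + θ) * (m - #T) := by ring
  · calc
      D * (#S + #T - m) ≤ A * (#S / 512) := by
        gcongr <;> linarith
      _ ≤ #(Rel.interedges Q S T) := by
        have : 0 ≤ A * #S := mul_nonneg (hD0.trans hDA) hS0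
        obtain hS | hS := le_total (A / 4) #S
        · linarith [hexp S T hS hT]
        · have hQrow (x : X) : 9 / 10 * A ≤ #{y | Q x y} := by
            refine (hA.trans (hrow x)).trans ?_
            exact_mod_cast card_le_card (monotone_filter_right _ fun y _ ↦ hRQ x y)
          have h := card_mul_sub_le_card_interedges Q (fun x (_ : x ∈ S) ↦ hQrow x) T
          rw [hY] at h
          nlinarith

theorem exists_equivs_of_almost_regular {D : ℕ} (hX : Fintype.card X = m)
    (hY : Fintype.card Y = m)
    (hRQ : ∀ x y, R x y → Q x y) (hθ : 0 ≤ θ) (hD : D ≤ d - 1024 * θ) (hDA : D ≤ A)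
    (hA : 9 / 10 * A ≤ d - θ)
    (hrow : ∀ x, |#{y | R x y} - d| ≤ θ) (hcol : ∀ y, |#{x | R x y} - d| ≤ θ)
    (hexp : ∀ (S : Finset X) (T : Finset Y), A / 4 ≤ #S → (m : ℝ) / 2 ≤ #T →
      A / 256 * #S ≤ #(Rel.interedges Q S T))
    (hexp' : ∀ (T : Finset Y) (S : Finset X), A / 4 ≤ #T → (m : ℝ) / 2 ≤ #S →
      A / 256 * #T ≤ #(Rel.interedges (fun y x ↦ Q x y) T S)) :
    ∃ π : Fin D → X ≃ Y, (∀ i x, Q x (π i x)) ∧ ∀ x, Function.Injective fun i ↦ π i x := by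
  have hrow' (x : X) := abs_le.1 (hrow x)
  have hcol' (y : Y) := abs_le.1 (hcol y)
  obtain ⟨P, hPQ, hP⟩ := exists_isBiregular (D := D) hX hY Q fun S T ↦ by
    suffices h : (D : ℝ) * (#S + #T - m) ≤ #(Rel.interedges Q S T) by
      rify; linarith
    obtain hT | hT := le_total ((m : ℝ) / 2) #T
    · exact mul_add_sub_le_card_interedges_of_expanding hY hRQ hθ D.cast_nonneg hD hDA hA
        (fun x ↦ by linarith [hrow' x]) (fun y ↦ by linarith [hcol' y]) hexp S hT
    obtain hS | hS := le_total ((m : ℝ) / 2) #S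
    · have := mul_add_sub_le_card_interedges_of_expanding (R := fun y x ↦ R x y) hX
        (fun y x ↦ hRQ x y) hθ D.cast_nonneg hD hDA hA
        (fun y ↦ by linarith [hcol' y]) (fun x ↦ by linarith [hrow' x]) hexp' T hS
      rwa [← card_interedges_swap, add_comm (#T : ℝ)] at this
    · exact (mul_nonpos_of_nonneg_of_nonpos D.cast_nonneg (by linarith)).trans (Nat.cast_nonneg _)
  obtain ⟨π, hπ, hinj⟩ := hP.exists_equivs
  exact ⟨π, fun i x ↦ hPQ _ _ (hπ i x), hinj⟩

end AlmostRegular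

section TypicalBlocks

variable {V : Type*} [Fintype V] (B : SimpleGraph V)

/-- The vertices with no neighbour in `A` (members of `A` included). -/
noncomputable def commonNonNbrs (A : Finset V) : Finset V := {y | ∀ v ∈ A, ¬B.Adj v y}

/-- The vertices adjacent to less than the fraction `α / 2` of `W`. -/
noncomputable def lowDegreeInto (α : ℝ) (W : Finset V) : Finset V :=
  {x | (#{y ∈ W | B.Adj x y} : ℝ) < α / 2 * #W}

theorem card_commonNonNbrs_insert_le {α : ℝ} (A : Finset V) {v : V}
    (hv : v ∉ lowDegreeInto B α (commonNonNbrs B A)) :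
    (#(commonNonNbrs B (insert v A)) : ℝ) ≤ (1 - α / 2) * #(commonNonNbrs B A) := by
  have heq : commonNonNbrs B (insert v A) = {y ∈ commonNonNbrs B A | ¬B.Adj v y} := by
    ext; simp [commonNonNbrs, and_comm]
  have hsplit : (#{y ∈ commonNonNbrs B A | B.Adj v y} : ℝ) +
      #{y ∈ commonNonNbrs B A | ¬B.Adj v y} = #(commonNonNbrs B A) := by
    exact_mod_cast card_filter_add_card_filter_not _
  simp only [lowDegreeInto, mem_filter_univ, not_lt] at hv
  rw [heq]
  linarith

theorem exists_subset_card_commonNonNbrs_le {α c : ℝ} {q : ℕ} (U : Finset V)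
    (hU : ∀ A ⊆ U, #A ≤ q → c < #(commonNonNbrs B A) →
      ¬U ⊆ lowDegreeInto B α (commonNonNbrs B A)) :
    ∃ A ⊆ U, #A ≤ q ∧
      (#(commonNonNbrs B A) : ℝ) ≤ max c (Real.exp (-(α / 2) * q) * Fintype.card V) := by
  suffices h : ∀ t ≤ q, ∃ A ⊆ U, #A ≤ t ∧
      (#(commonNonNbrs B A) : ℝ) ≤ max c (Real.exp (-(α / 2) * t) * Fintype.card V) from h q le_rfl
  intro t
  induction t with
  | zero =>
    refine fun _ ↦ ⟨∅, empty_subset _, by simp, le_max_of_le_right ?_⟩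
    simpa using card_le_univ (commonNonNbrs B ∅)
  | succ t ih =>
    intro ht
    obtain ⟨A, hAU, hAt, hA⟩ := ih (by omega)
    obtain hc | hc := le_or_gt (#(commonNonNbrs B A) : ℝ) c
    · exact ⟨A, hAU, by omega, le_max_of_le_left hc⟩
    obtain ⟨v, hvU, hv⟩ := not_subset.1 (hU A hAU (by omega) hc)
    refine ⟨insert v A, insert_subset hvU hAU, (card_insert_le _ _).trans (by omega),
      le_max_of_le_right ?_⟩
    calc
      (#(commonNonNbrs B (insert v A)) : ℝ) ≤ (1 - α / 2) * #(commonNonNbrs B A) :=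
        card_commonNonNbrs_insert_le B A hv
      _ ≤ Real.exp (-(α / 2)) * (Real.exp (-(α / 2) * t) * Fintype.card V) := by
        gcongr
        · linarith [Real.add_one_le_exp (-(α / 2))]
        · exact (le_max_iff.1 hA).resolve_left hc.not_ge
      _ = Real.exp (-(α / 2) * (t + 1 : ℕ)) * Fintype.card V := by
        rw [← mul_assoc, ← Real.exp_add]
        push_cast
        ring_nf

/-- `φ` enumerates a block that behaves like a random one: it meets the neighbourhoods of a
relation `R`, the large common non-neighbourhoods in `B` of few vertices and, for the small ones,
the vertices of low degree into them, in about the expected number of points. -/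
structure IsTypicalBlock {X : Type*} [Fintype X] (R : V → V → Prop) (α : ℝ) (q : ℕ) (d θ : ℝ)
    (φ : X → V) : Prop where
  row (v : V) : |#{x | R v (φ x)} - d| ≤ θ
  col (v : V) : |#{x | R (φ x) v} - d| ≤ θ
  low (A : Finset V) : #A ≤ q → (Fintype.card V : ℝ) / 8 < #(commonNonNbrs B A) →
    #{x | φ x ∈ lowDegreeInto B α (commonNonNbrs B A)} ≤ α * Fintype.card X / 9
  common (A : Finset V) : #A ≤ q → #(commonNonNbrs B A) ≤ (Fintype.card V : ℝ) / 8 →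
    #{x | φ x ∈ commonNonNbrs B A} ≤ (Fintype.card X : ℝ) / 4

namespace IsTypicalBlock

variable {B}
variable {X Y : Type*} [Fintype X] [Fintype Y] {R : V → V → Prop} {α d θ : ℝ} {q m : ℕ}
  {φ : X → V} {χ : Y → V}

theorem exists_subset_card_commonNonNbrs_le (hφ : IsTypicalBlock B R α q d θ φ) (hα : 0 < α)
    (hq : 6 / α ≤ q) {S : Finset X} (hS : α * Fintype.card X / 9 < #S) :
    ∃ A ⊆ S.image φ, #A ≤ q ∧ #(commonNonNbrs B A) ≤ (Fintype.card V : ℝ) / 8 := by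
  obtain ⟨A, hAS, hAq, hA⟩ := HamiltonPacking.exists_subset_card_commonNonNbrs_le B (α := α)
    (c := Fintype.card V / 8) (q := q) (S.image φ) fun A _ hAq hA hsub ↦ by
      refine (hS.trans_le ?_).not_ge (hφ.low A hAq hA)
      exact_mod_cast card_le_card fun x hx ↦ by simpa using hsub (mem_image_of_mem φ hx)
  refine ⟨A, hAS, hAq, hA.trans (max_le le_rfl ?_)⟩
  have hexp : Real.exp (-(α / 2) * q) ≤ 1 / 8 := calc
    Real.exp (-(α / 2) * q) ≤ Real.exp (-3) := by
      rw [div_le_iff₀ hα] at hq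
      gcongr
      linarith
    _ = (Real.exp 1 ^ 3)⁻¹ := by rw [Real.exp_neg, ← Real.exp_nat_mul]; norm_num
    _ ≤ (2 ^ 3)⁻¹ := by
      gcongr
      linarith [Real.exp_one_gt_d9]
    _ = 1 / 8 := by norm_num
  calc
    Real.exp (-(α / 2) * q) * Fintype.card V ≤ 1 / 8 * Fintype.card V := by gcongr
    _ = Fintype.card V / 8 := by ring

theorem card_le_of_card_adj_le (hχ : IsTypicalBlock B R α q d θ χ) {A : Finset V} (hAq : #A ≤ q)
    (hA : #(commonNonNbrs B A) ≤ (Fintype.card V : ℝ) / 8) {T : Finset Y} {c : ℝ}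
    (hT : ∀ v ∈ A, #{y ∈ T | B.Adj v (χ y)} ≤ c) :
    #T ≤ (Fintype.card Y : ℝ) / 4 + #A * c := by
  have hcover : T ⊆ ({y | χ y ∈ commonNonNbrs B A} : Finset Y) ∪
      A.biUnion fun v ↦ {y ∈ T | B.Adj v (χ y)} := by
    intro y hy
    by_cases h : χ y ∈ commonNonNbrs B A
    · simp [h]
    · refine mem_union_right _ ?_
      simpa [commonNonNbrs, hy] using h
  have hunion := (card_le_card hcover).trans ((card_union_le _ _).trans
    (Nat.add_le_add_left card_biUnion_le _))
  have hsum : ∑ v ∈ A, (#{y ∈ T | B.Adj v (χ y)} : ℝ) ≤ #A * c := by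
    rw [← nsmul_eq_mul]; exact sum_le_card_nsmul _ _ _ hT
  rify at hunion
  linarith [hχ.common A hAq hA]

theorem mul_le_card_interedges (hφ : IsTypicalBlock B R α q d θ φ)
    (hχ : IsTypicalBlock B R α q d θ χ) (hX : Fintype.card X = m) (hY : Fintype.card Y = m)
    (hm : 0 < m) (hα : 0 < α) (hq : 6 / α ≤ q) (hq' : q ≤ 7 / α) {S : Finset X} {T : Finset Y}
    (hS : α * m / 4 ≤ #S) (hT : (m : ℝ) / 2 ≤ #T) :
    α * m / 256 * #S ≤ #(Rel.interedges (fun x y ↦ B.Adj (φ x) (χ y)) S T) := by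
  by_contra! hfew
  have hm' : (0 : ℝ) < m := by exact_mod_cast hm
  set S' := {x ∈ S | (#{y ∈ T | B.Adj (φ x) (χ y)} : ℝ) ≤ α * m / 128}
  have hSS' : (#S : ℝ) ≤ 2 * #S' :=
    card_le_two_mul_card_filter_card_le _ (by positivity) (by linarith)
  obtain ⟨A, hAS, hAq, hA⟩ := hφ.exists_subset_card_commonNonNbrs_le hα hq (S := S') (by
    have : 0 < α * m := by positivity
    rw [hX]; linarith)
  have hTA := hχ.card_le_of_card_adj_le hAq hA (T := T) (c := α * m / 128) fun v hv ↦ by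
    obtain ⟨x, hx, rfl⟩ := mem_image.1 (hAS hv)
    exact (mem_filter.1 hx).2
  have hqα : #A * (α * m / 128) ≤ 7 * (m / 128 : ℝ) := calc
    #A * (α * m / 128) ≤ 7 / α * (α * m / 128) := by
      gcongr
      exact le_trans (by exact_mod_cast hAq) hq'
    _ = 7 * (m / 128) := by field_simp
  rw [hY] at hTA
  linarith

theorem exists_equivs (hφ : IsTypicalBlock B R α q d θ φ) (hχ : IsTypicalBlock B R α q d θ χ)
    (hRB : ∀ u v, R u v → B.Adj u v) (hX : Fintype.card X = m) (hY : Fintype.card Y = m)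
    (hm : 0 < m) (hα : 0 < α) (hq : 6 / α ≤ q) (hq' : q ≤ 7 / α) (hθ : 0 ≤ θ) {D : ℕ}
    (hD : D ≤ d - 1024 * θ) (hDα : D ≤ α * m) (hdα : 9 / 10 * (α * m) ≤ d - θ) :
    ∃ π : Fin D → X ≃ Y, (∀ i x, B.Adj (φ x) (χ (π i x))) ∧
      ∀ x, Function.Injective fun i ↦ π i x := by
  refine exists_equivs_of_almost_regular (R := fun x y ↦ R (φ x) (χ y)) hX hY
    (fun x y ↦ hRB _ _) hθ hD hDα hdα (fun x ↦ hχ.row (φ x)) (fun y ↦ hφ.col (χ y))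
    (fun S T hS hT ↦ ?_) fun T S hT hS ↦ ?_
  · exact hφ.mul_le_card_interedges hχ hX hY hm hα hq hq' hS hT
  · simpa only [B.adj_comm] using hχ.mul_le_card_interedges hφ hY hX hm hα hq hq' hT hS

end IsTypicalBlock

theorem card_finset_card_le_le (V : Type*) [Fintype V] (q : ℕ) :
    Fintype.card {A : Finset V // #A ≤ q} ≤ (Fintype.card V + 1) ^ q := by
  rw [Fintype.card_subtype]
  calc
    #{A : Finset V | #A ≤ q} ≤
        #((range (q + 1)).biUnion fun i ↦ powersetCard i (univ : Finset V)) :=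
      card_le_card fun A hA ↦ by simpa [Nat.lt_succ_iff] using hA
    _ ≤ ∑ i ∈ range (q + 1), (Fintype.card V).choose i := by
      simpa [card_powersetCard] using
        card_biUnion_le (s := range (q + 1)) (t := fun i ↦ powersetCard i (univ : Finset V))
    _ ≤ ∑ i ∈ range (q + 1), Fintype.card V ^ i * 1 ^ (q - i) * q.choose i := by
      refine sum_le_sum fun i hi ↦ ?_
      rw [one_pow, mul_one]
      exact (Nat.choose_le_pow _ _).trans
        (Nat.le_mul_of_pos_right _ (Nat.choose_pos (Nat.lt_succ_iff.1 (mem_range.1 hi))))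
    _ = (Fintype.card V + 1) ^ q := (add_pow _ _ _).symm

end TypicalBlocks

section Blocks

variable {V : Type*} [Fintype V] (B : SimpleGraph V) {n k m ρ r D q : ℕ} [NeZero k] {α β ε : ℝ}

/-- The sets whose intersections with the blocks `IsTypicalBlock` controls. -/
noncomputable def typicalityTests (R : V → V → Prop) (α : ℝ) (q : ℕ) :
    V ⊕ V ⊕ {A : Finset V // #A ≤ q} → Finset V
  | .inl v => {y | R v y}
  | .inr (.inl v) => {x | R x v}
  | .inr (.inr A) =>
    if (Fintype.card V : ℝ) / 8 < #(commonNonNbrs B A) then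
      lowDegreeInto B α (commonNonNbrs B A)
    else commonNonNbrs B A

variable {B}

theorem exists_equipartition_isTypicalBlock (hV : Fintype.card V = n) (hn : n = k * m + ρ)
    (hε : 0 < ε) (hα : 10 ^ 4 * ε ≤ α) (hα1 : α < 1) (hβ : 99 / 100 * α ≤ β) (hδ : 10 ≤ ε * n)
    (hB : IsPairDense B β (ε * n)) (hρ : ρ / k ≤ ε * m / 1024) {R : V → V → Prop}
    (hR : IsBiregular R r)
    (hsum : 2 * ((n + (n + (n + 1) ^ q) : ℕ) * k) * Real.exp (-2 * (ε * m / 1024) ^ 2 / m) < 1) :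
    ∃ ψ : ZMod k → Fin m → V, Function.Injective (Function.uncurry ψ) ∧
      ∀ i, IsTypicalBlock B R α q (r / k) (ε * m / 512) (ψ i) := by
  have hk : (0 : ℝ) < k := by exact_mod_cast NeZero.pos k
  have hnk : (n : ℝ) / k = m + ρ / k := by rw [hn]; push_cast; field_simp
  have hρ0 : (0 : ℝ) ≤ ρ / k := by positivity
  obtain ⟨ψ, hinj, hψ⟩ := exists_equipartition (hV.trans hn) (typicalityTests B R α q)
    (t := ε * m / 1024) (by positivity) (by
      refine lt_of_le_of_lt ?_ hsum
      gcongr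
      rw [Fintype.card_sum, Fintype.card_sum, hV]
      gcongr
      exact hV ▸ card_finset_card_le_le V q)
  refine ⟨ψ, hinj, fun i ↦ ⟨fun v ↦ ?_, fun v ↦ ?_, fun A hAq hA ↦ ?_, fun A hAq hA ↦ ?_⟩⟩
  · have h := hψ i (.inl v)
    simp only [typicalityTests, mem_filter_univ, hR.row] at h
    linarith
  · have h := hψ i (.inr (.inl v))
    simp only [typicalityTests, mem_filter_univ, hR.col] at h
    linarith
  · have h := (abs_le.1 (hψ i (.inr (.inr ⟨A, hAq⟩)))).2
    simp only [typicalityTests, if_pos hA] at h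
    have hlow : (#(lowDegreeInto B α (commonNonNbrs B A)) : ℝ) / k ≤ 4 * ε * (m + ρ / k) := calc
      (#(lowDegreeInto B α (commonNonNbrs B A)) : ℝ) / k ≤ 4 * (ε * n) / k := by
        gcongr
        refine card_filter_card_adj_lt_le B hδ (by linarith) hβ hB ?_
        rw [hV] at hA
        nlinarith
      _ = 4 * ε * (m + ρ / k) := by rw [← hnk]; ring
    rw [Fintype.card_fin]
    nlinarith
  · have h := (abs_le.1 (hψ i (.inr (.inr ⟨A, hAq⟩)))).2
    simp only [typicalityTests, if_neg hA.not_gt] at h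
    have hsmall : (#(commonNonNbrs B A) : ℝ) / k ≤ (m + ρ / k) / 8 := by
      rw [← hnk, div_right_comm, ← hV]
      gcongr
    rw [Fintype.card_fin]
    nlinarith

theorem exists_blocks (hV : Fintype.card V = n) (hn : n = k * m + ρ) (hε : 0 < ε)
    (hα : 10 ^ 4 * ε ≤ α) (hα1 : α < 1) (hm : 10 ≤ ε * m) (hρ : ρ / k ≤ ε * m / 1024)
    (hD : D ≤ (α - 8 * ε) * n / k + 1) (hq : 6 / α ≤ q) (hq' : q ≤ 7 / α)
    (hsum : 2 * ((n + (n + (n + 1) ^ q) : ℕ) * k) * Real.exp (-2 * (ε * m / 1024) ^ 2 / m) < 1)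
    (hdeg : ∀ v, (α - 5 / 2 * ε) * n ≤ #{w | B.Adj v w})
    (hB : IsPairDense B (α - 5 / 2 * ε) (ε * n)) :
    ∃ (ψ : ZMod k → Fin m → V) (π : ZMod k → ZMod k → Fin D → Fin m ≃ Fin m),
      Function.Injective (Function.uncurry ψ) ∧
      (∀ i j h x, B.Adj (ψ i x) (ψ j (π i j h x))) ∧
      ∀ i j x, Function.Injective fun h ↦ π i j h x := by
  have hk : (0 : ℝ) < k := by exact_mod_cast NeZero.pos k
  have hm0 : 0 < m := Nat.pos_of_ne_zero fun h ↦ by simp [h] at hm; linarith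
  have hmn : (m : ℝ) ≤ n := by
    exact_mod_cast hn ▸ (Nat.le_mul_of_pos_left m (NeZero.pos k)).trans (Nat.le_add_right _ _)
  have hεn : 10 ≤ ε * n := hm.trans (by gcongr)
  obtain ⟨R, hRB, hR⟩ := exists_isBiregular_of_degree_of_dense B (r := ⌊(α - 5 * ε) * n⌋₊) hV hε
    (by linarith) (by linarith) hdeg hB
    ((Nat.floor_le (mul_nonneg (by linarith) n.cast_nonneg)).trans_eq (by ring))
  obtain ⟨ψ, hinj, hψ⟩ := exists_equipartition_isTypicalBlock hV hn hε hα hα1 (by linarith) hεn hB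
    hρ hR hsum
  have hnk : (n : ℝ) / k = m + ρ / k := by rw [hn]; push_cast; field_simp
  have hρ0 : (0 : ℝ) ≤ ρ / k := by positivity
  have hr : (α - 5 * ε) * (m + ρ / k) - 1 ≤ (⌊(α - 5 * ε) * n⌋₊ : ℝ) / k := by
    have hk1 : (1 : ℝ) ≤ k := by exact_mod_cast NeZero.pos k
    rw [le_div_iff₀ hk, ← hnk, sub_mul, mul_assoc, div_mul_cancel₀ _ hk.ne']
    linarith [Nat.lt_floor_add_one ((α - 5 * ε) * n)]
  rw [mul_div_assoc, hnk] at hD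
  have hαm : 10 ^ 4 * (ε * m) ≤ α * m := by nlinarith
  have hαρ : α * (ρ / k) ≤ 1 * (ρ / k) := by gcongr
  have hερ : 0 ≤ ε * (ρ / k) := by positivity
  have hερ' : ε * (ρ / k) ≤ α * (ρ / k) := by gcongr; linarith
  choose π hπ hπinj using fun i j ↦ (hψ i).exists_equivs (hψ j) hRB (Fintype.card_fin m)
    (Fintype.card_fin m) hm0 (by linarith) hq hq' (by positivity) (D := D)
    (by nlinarith) (by nlinarith) (by nlinarith)
  exact ⟨ψ, π, hinj, hπ, hπinj⟩

end Blocks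

section Walecki

/-- The zigzag order `0, k - 1, 1, k - 2, …` of `0, …, k - 1`. -/
def zigzag (k t : ℕ) : ℕ :=
  if t % 2 = 0 then t / 2 else k - (t + 1) / 2

theorem zigzag_lt {k t : ℕ} (ht : t < k) : zigzag k t < k := by
  unfold zigzag; split_ifs <;> omega

theorem injOn_zigzag {k : ℕ} (hk : Even k) : Set.InjOn (zigzag k) (Set.Iio k) := by
  intro t ht t' ht' h
  rw [Set.mem_Iio] at ht ht'
  unfold zigzag at h; split_ifs at h <;> grind

theorem zigzag_add_zigzag_succ {k t : ℕ} (ht : t + 1 < k) :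
    zigzag k t + zigzag k (t + 1) = k - 1 ∨ zigzag k t + zigzag k (t + 1) = k := by
  unfold zigzag; split_ifs <;> omega

/-- The `t`-th vertex of the `c`-th zigzag path on `ZMod k`. For `k = 2 * K`, the paths with
`c < K` are Walecki's decomposition of the complete graph on `ZMod k` into Hamilton paths. -/
def waleckiPath (k c t : ℕ) : ZMod k :=
  (c + zigzag k t : ℕ)

theorem injOn_waleckiPath {k : ℕ} (hk : Even k) (c : ℕ) :
    Set.InjOn (waleckiPath k c) (Set.Iio k) := by
  intro t ht t' ht' h
  rw [waleckiPath, waleckiPath, ZMod.natCast_eq_natCast_iff] at h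
  exact injOn_zigzag hk ht ht'
    ((Nat.ModEq.add_left_cancel' c h).eq_of_lt_of_lt (zigzag_lt ht) (zigzag_lt ht'))

-- Along the `c`-th path the sums of consecutive vertices are `2 * c - 1` and `2 * c`.
theorem eq_of_waleckiPath_add_eq {K c c' t t' : ℕ} (hc : c < K) (hc' : c' < K)
    (ht : t + 1 < 2 * K) (ht' : t' + 1 < 2 * K)
    (h : waleckiPath (2 * K) c t + waleckiPath (2 * K) c (t + 1) =
      waleckiPath (2 * K) c' t' + waleckiPath (2 * K) c' (t' + 1)) : c = c' := by
  unfold waleckiPath at h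
  rw [← Nat.cast_add, ← Nat.cast_add, ZMod.natCast_eq_natCast_iff, Nat.modEq_iff_dvd] at h
  have hsum := zigzag_add_zigzag_succ ht
  have hsum' := zigzag_add_zigzag_succ ht'
  have hzero := Int.eq_zero_of_abs_lt_dvd h (by rw [abs_lt]; omega)
  omega

theorem eq_and_eq_of_mk_waleckiPath_eq {K c c' t t' : ℕ} (hc : c < K) (hc' : c' < K)
    (ht : t + 1 < 2 * K) (ht' : t' + 1 < 2 * K)
    (h : s(waleckiPath (2 * K) c t, waleckiPath (2 * K) c (t + 1)) =
      s(waleckiPath (2 * K) c' t', waleckiPath (2 * K) c' (t' + 1))) : c = c' ∧ t = t' := by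
  obtain ⟨h₀, h₁⟩ | ⟨h₀, h₁⟩ := Sym2.eq_iff.1 h
  all_goals
    obtain rfl : c = c' := eq_of_waleckiPath_add_eq hc hc' ht ht' (by linear_combination h₀ + h₁)
    have hinj := injOn_waleckiPath (even_two_mul K) c
    have := hinj (by grind) (by grind) h₀
    have := hinj (by grind) (by grind) h₁
    omega

end Walecki

section PathEdges

variable {V Y : Type*}

theorem mem_pathEdges_append_left {P : List V} (Q : List V) {e : Sym2 V} (he : e ∈ pathEdges P) :
    e ∈ pathEdges (P ++ Q) := by
  obtain rfl | hQ := eq_or_ne Q []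
  · rwa [List.append_nil]
  obtain rfl | hP := eq_or_ne P []
  · simp [pathEdges] at he
  simp [pathEdges_append hP hQ, he]

theorem mem_pathEdges_append_right (P : List V) {Q : List V} {e : Sym2 V}
    (he : e ∈ pathEdges Q) : e ∈ pathEdges (P ++ Q) := by
  rw [← pathEdges_reverse, List.reverse_append]
  exact mem_pathEdges_append_left _ (by rwa [pathEdges_reverse])

theorem mem_pathEdges_flatMap {f : Y → List V} {L : List Y} {y : Y} (hy : y ∈ L) {e : Sym2 V}
    (he : e ∈ pathEdges (f y)) : e ∈ pathEdges (L.flatMap f) := by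
  obtain ⟨L₁, L₂, rfl⟩ := List.append_of_mem hy
  rw [List.flatMap_append, List.flatMap_cons]
  exact mem_pathEdges_append_right _ (mem_pathEdges_append_left _ he)

theorem mem_cycleEdges_of_mem_pathEdges {l : List V} {e : Sym2 V} (he : e ∈ pathEdges l) :
    e ∈ cycleEdges l := by
  cases l with
  | nil => exact he
  | cons x t => exact Multiset.mem_cons_of_mem he

theorem countP_pathEdges_append_le (p : Sym2 V → Prop) [DecidablePred p] (P Q : List V) :
    (pathEdges (P ++ Q)).countP p ≤ (pathEdges P).countP p + (pathEdges Q).countP p + 1 := by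
  obtain rfl | hP := eq_or_ne P []
  · simp [pathEdges]
  obtain rfl | hQ := eq_or_ne Q []
  · simp [pathEdges]
  rw [pathEdges_append hP hQ, Multiset.countP_add, Multiset.countP_add]
  gcongr
  exact (Multiset.countP_le_card _ _).trans_eq (Multiset.card_singleton _)

theorem countP_cycleEdges_le (p : Sym2 V → Prop) [DecidablePred p] (l : List V) :
    (cycleEdges l).countP p ≤ (pathEdges l).countP p + 1 := by
  cases l with
  | nil => simp [cycleEdges]
  | cons x t =>
    rw [cycleEdges, Multiset.countP_cons]
    split_ifs <;> omega

theorem countP_pathEdges_flatMap_le {p : Sym2 V → Prop} [DecidablePred p] {f : Y → List V}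
    (hf : ∀ y, ∀ e ∈ pathEdges (f y), ¬p e) (L : List Y) :
    (pathEdges (L.flatMap f)).countP p ≤ L.length := by
  induction L with
  | nil => simp [pathEdges]
  | cons y L ih =>
    rw [List.flatMap_cons, List.length_cons]
    have hy : (pathEdges (f y)).countP p = 0 := Multiset.countP_eq_zero.2 (hf y)
    linarith [countP_pathEdges_append_le p (f y) (L.flatMap f)]

theorem exists_eq_of_mem_pathEdges_map_range {f : ℕ → V} {k : ℕ} {e : Sym2 V}
    (he : e ∈ pathEdges ((List.range k).map f)) : ∃ t, t + 1 < k ∧ e = s(f t, f (t + 1)) := by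
  induction k with
  | zero => simp [pathEdges] at he
  | succ k ih =>
    obtain _ | k := k
    · simp [pathEdges] at he
    rw [List.range_succ, List.map_append, pathEdges_append (by simp) (by simp),
      Multiset.mem_add] at he
    obtain he | he := he
    · obtain ⟨t, ht, rfl⟩ := ih (by simpa [pathEdges] using he)
      exact ⟨t, by omega, rfl⟩
    · exact ⟨k, by omega, by simpa [List.range_succ] using he⟩

theorem exists_isEnumeration_append [Fintype V] {l : List V} (hl : l.Nodup) :
    ∃ l', IsEnumeration (l ++ l') ∧ l.length + l'.length = Fintype.card V := by
  have henum : IsEnumeration (l ++ (l.toFinsetᶜ).toList) :=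
    ⟨hl.append (nodup_toList _) fun v hv hv' ↦ by simp [hv] at hv', fun v ↦ by
      by_cases hv : v ∈ l <;> simp [hv]⟩
  exact ⟨_, henum, by rw [← List.length_append, henum.length_eq]⟩

end PathEdges

section Threads

variable {V ι X H : Type*} (ψ : ι → X → V) (σ : ι → ι → X ≃ X) (a : ℕ → ι) (k : ℕ)

/-- The composite of the matchings `σ` along the first `t` steps of `a`. -/
def threadEquiv : ℕ → X ≃ X
  | 0 => .refl X
  | t + 1 => (threadEquiv t).trans (σ (a t) (a (t + 1)))

/-- The path with `k` vertices starting at the point `x` of the block `a 0` and following the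
matchings `σ` through the blocks `a 0, a 1, …`. The points of the block `i` are `ψ i x`. -/
def thread (x : X) : List V :=
  (List.range k).map fun t ↦ ψ (a t) (threadEquiv σ a t x)

/-- The edges of all threads along `a`. -/
noncomputable def threadEdges [Fintype X] : Finset (Sym2 V) :=
  univ.biUnion fun x ↦ (pathEdges (thread ψ σ a k x)).toFinset

variable {ψ σ a k}

theorem exists_eq_of_mem_threadEdges [Fintype X] {e : Sym2 V} (he : e ∈ threadEdges ψ σ a k) :
    ∃ t x, t + 1 < k ∧ e = s(ψ (a t) x, ψ (a (t + 1)) (σ (a t) (a (t + 1)) x)) := by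
  obtain ⟨x, -, he⟩ := mem_biUnion.1 he
  obtain ⟨t, ht, rfl⟩ := exists_eq_of_mem_pathEdges_map_range (Multiset.mem_toFinset.1 he)
  exact ⟨t, _, ht, rfl⟩

theorem nodup_flatMap_thread (hψ : Function.Injective (Function.uncurry ψ))
    (ha : Set.InjOn a (Set.Iio k)) {L : List X} (hL : L.Nodup) :
    (L.flatMap (thread ψ σ a k)).Nodup := by
  have hinj {t t' x x'} (ht : t < k) (ht' : t' < k)
      (h : ψ (a t) (threadEquiv σ a t x) = ψ (a t') (threadEquiv σ a t' x')) :
      t = t' ∧ x = x' := by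
    obtain ⟨h₁, h₂⟩ := Prod.mk.inj (@hψ (_, _) (_, _) h)
    obtain rfl := ha ht ht' h₁
    exact ⟨rfl, (threadEquiv σ a t).injective h₂⟩
  refine List.nodup_flatMap.2 ⟨fun x _ ↦ List.nodup_range.map_on ?_, hL.imp ?_⟩
  · exact fun t ht t' ht' h ↦ (hinj (List.mem_range.1 ht) (List.mem_range.1 ht') h).1
  · intro x x' hx v hv hv'
    obtain ⟨t, ht, rfl⟩ := List.mem_map.1 hv
    obtain ⟨t', ht', h⟩ := List.mem_map.1 hv'
    exact hx (hinj (List.mem_range.1 ht') (List.mem_range.1 ht) h).2.symm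

theorem exists_isEnumeration_of_threads [Fintype V] [Fintype X]
    (hψ : Function.Injective (Function.uncurry ψ)) (ha : Set.InjOn a (Set.Iio k)) {ρ : ℕ}
    (hV : Fintype.card V = k * Fintype.card X + ρ) :
    ∃ l : List V, IsEnumeration l ∧ (∀ e ∈ threadEdges ψ σ a k, e ∈ cycleEdges l) ∧
      (cycleEdges l).countP (· ∉ threadEdges ψ σ a k) ≤ Fintype.card X + ρ + 2 := by
  obtain ⟨L, hL⟩ : ∃ L, L = (univ : Finset X).toList.flatMap (thread ψ σ a k) := ⟨_, rfl⟩
  have hnodup : L.Nodup := hL ▸ nodup_flatMap_thread hψ ha (nodup_toList univ)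
  obtain ⟨R, henum, hlength⟩ := exists_isEnumeration_append hnodup
  have hR : R.length = ρ := by
    have : L.length = Fintype.card X * k := by simp [hL, List.length_flatMap, thread]
    linarith
  refine ⟨L ++ R, henum, fun e he ↦ ?_, ?_⟩
  · obtain ⟨x, -, he⟩ := mem_biUnion.1 he
    exact mem_cycleEdges_of_mem_pathEdges <| mem_pathEdges_append_left R <|
      hL ▸ mem_pathEdges_flatMap (mem_toList.2 (mem_univ x)) (Multiset.mem_toFinset.1 he)
  · have hthreads : (pathEdges L).countP (· ∉ threadEdges ψ σ a k) ≤ Fintype.card X := by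
      rw [hL]
      refine (countP_pathEdges_flatMap_le (fun x e he ↦ ?_) _).trans_eq (by simp)
      exact not_not.2 (mem_biUnion.2 ⟨x, mem_univ x, Multiset.mem_toFinset.2 he⟩)
    have hrest : (pathEdges R).countP (· ∉ threadEdges ψ σ a k) ≤ ρ := by
      refine (Multiset.countP_le_card _ _).trans ?_
      rw [card_pathEdges, hR]
      exact Nat.sub_le ρ 1
    linarith [countP_cycleEdges_le (· ∉ threadEdges ψ σ a k) (L ++ R),
      countP_pathEdges_append_le (· ∉ threadEdges ψ σ a k) L R]

variable {K : ℕ} {ψ : ZMod (2 * K) → X → V} {π : ZMod (2 * K) → ZMod (2 * K) → H → X ≃ X}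

theorem pairwise_disjoint_threadEdges [Fintype X] (hψ : Function.Injective (Function.uncurry ψ))
    (hπ : ∀ i j x, Function.Injective fun h ↦ π i j h x) :
    Pairwise (Function.onFun Disjoint fun j : Fin K × H ↦
      threadEdges ψ (fun i i' ↦ π i i' j.2) (waleckiPath (2 * K) j.1) (2 * K)) := by
  rintro ⟨c, h⟩ ⟨c', h'⟩ hne
  refine disjoint_left.2 fun e he he' ↦ hne ?_
  obtain ⟨t, x, ht, rfl⟩ := exists_eq_of_mem_threadEdges he
  obtain ⟨t', x', ht', heq⟩ := exists_eq_of_mem_threadEdges he'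
  have hψ' {i i' x x'} : ψ i x = ψ i' x' ↔ i = i' ∧ x = x' :=
    (hψ.eq_iff (a := (i, x)) (b := (i', x'))).trans Prod.mk_inj
  simp only [Sym2.eq_iff, hψ'] at heq
  obtain ⟨hcc', rfl⟩ := eq_and_eq_of_mk_waleckiPath_eq c.2 c'.2 ht ht'
    (Sym2.eq_iff.2 (heq.imp (fun h ↦ ⟨h.1.1, h.2.1⟩) fun h ↦ ⟨h.1.1, h.2.1⟩))
  obtain rfl := Fin.ext hcc'
  obtain ⟨⟨-, rfl⟩, -, hx⟩ | ⟨⟨hloop, -⟩, -⟩ := heq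
  · rw [hπ _ _ _ hx]
  · have := injOn_waleckiPath (even_two_mul K) c (by grind) (by grind) hloop
    omega

theorem exists_isEnumeration_of_blocks [Fintype V] [Fintype X] {ρ : ℕ}
    (hV : Fintype.card V = 2 * K * Fintype.card X + ρ) {B : SimpleGraph V}
    (hψ : Function.Injective (Function.uncurry ψ))
    (hB : ∀ i j h x, B.Adj (ψ i x) (ψ j (π i j h x)))
    (hπ : ∀ i j x, Function.Injective fun h ↦ π i j h x) :
    ∃ (l : Fin K × H → List V) (P : Fin K × H → Finset (Sym2 V)),
      (∀ j, IsEnumeration (l j)) ∧ Pairwise (Function.onFun Disjoint P) ∧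
      (∀ j, ∀ e ∈ P j, e ∈ B.edgeSet) ∧ (∀ j, ∀ e ∈ P j, e ∈ cycleEdges (l j)) ∧
      ∀ j, (cycleEdges (l j)).countP (· ∉ P j) ≤ Fintype.card X + ρ + 2 := by
  choose l henum hmem hcost using fun j : Fin K × H ↦ exists_isEnumeration_of_threads
    (σ := fun i i' ↦ π i i' j.2) hψ (injOn_waleckiPath (even_two_mul K) j.1) hV
  refine ⟨l, _, henum, pairwise_disjoint_threadEdges hψ hπ, fun j e he ↦ ?_, hmem, hcost⟩
  obtain ⟨t, x, -, rfl⟩ := exists_eq_of_mem_threadEdges he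
  exact hB _ _ _ _

end Threads

section Numerics

variable {n : ℕ} {α ε : ℝ}

theorem lt_exp_of_log_le {q k : ℕ} {x : ℝ} (hn : 2 ≤ n) (hk : k ≤ n)
    (hx : (2 * q + 6) * Real.log n ≤ x) :
    2 * ((n + (n + (n + 1) ^ q) : ℕ) * k : ℝ) < Real.exp x := by
  have hpow : (n + 1) ^ q ≤ n ^ (2 * q) := by
    rw [pow_mul]
    exact Nat.pow_le_pow_left (by nlinarith) q
  have hcount : 2 * ((n + (n + (n + 1) ^ q)) * k) ≤ n ^ (2 * q + 5) := by
    have hone : 1 ≤ n ^ (2 * q) := Nat.one_le_pow _ _ (by omega)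
    calc
      2 * ((n + (n + (n + 1) ^ q)) * k) ≤ n * ((n * n ^ 2 * n ^ (2 * q)) * n) := by
        gcongr
        calc
          n + (n + (n + 1) ^ q) ≤ n * n ^ (2 * q) + (n * n ^ (2 * q) + n * n ^ (2 * q)) := by
            gcongr <;> nlinarith
          _ = n * 3 * n ^ (2 * q) := by ring
          _ ≤ n * n ^ 2 * n ^ (2 * q) := by gcongr; nlinarith
      _ = n ^ (2 * q + 5) := by ring
  calc
    2 * ((n + (n + (n + 1) ^ q) : ℕ) * k : ℝ) ≤ (n : ℝ) ^ (2 * q + 5) := by exact_mod_cast hcount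
    _ < (n : ℝ) ^ (2 * q + 6) :=
      pow_lt_pow_right₀ (by exact_mod_cast (by omega : 1 < n)) (by omega)
    _ = Real.exp ((2 * q + 6) * Real.log n) := by
      rw [mul_comm _ (Real.log n), ← Real.rpow_def_of_pos (by exact_mod_cast (by omega : 0 < n))]
      exact_mod_cast rfl
    _ ≤ Real.exp x := Real.exp_le_exp.2 hx

theorem le_pow_mul_of_log_le (hn : 2 ≤ n) (hlog : 10 ^ 11 * Real.log n ≤ ε ^ 5 * n) :
    6 * 10 ^ 10 ≤ ε ^ 5 * n := by
  have : Real.log 2 ≤ Real.log n := Real.log_le_log two_pos (by exact_mod_cast hn)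
  linarith [Real.log_two_gt_d9]

theorem le_mul_of_log_le (hn : 2 ≤ n) (hε : 0 < ε) (hε1 : ε ≤ 1)
    (hlog : 10 ^ 11 * Real.log n ≤ ε ^ 5 * n) : 6 * 10 ^ 10 ≤ ε * n := by
  refine (le_pow_mul_of_log_le hn hlog).trans ?_
  gcongr ?_ * _
  exact pow_le_of_le_one hε.le hε1 (by simp)

theorem exists_block_size (hε : 0 < ε) (hα : 10 ^ 4 * ε ≤ α) (hα1 : α < 1)
    (hn : 6 * 10 ^ 10 ≤ ε ^ 5 * n) :
    ∃ m : ℕ, 10 ^ 8 ≤ ε * m ∧ 10 ^ 6 * m ≤ ε ^ 2 * n ∧ 100 * (α * m) ≤ ε ^ 3 * n ∧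
      ε ^ 3 * n ≤ 200 * (α * m) := by
  have hα0 : 0 < α := by linarith
  obtain ⟨M, hM⟩ : ∃ M, M = ε ^ 3 * n / (100 * α) := ⟨_, rfl⟩
  have hMα : 100 * (α * M) = ε ^ 3 * n := by rw [hM]; field_simp
  have hM0 : 0 ≤ M := hM ▸ by positivity
  have hεM : 6 * 10 ^ 8 ≤ ε * M := by
    have : ε ^ 5 * n ≤ 100 * (ε * M) := calc
      ε ^ 5 * n ≤ ε ^ 4 * n := by
        gcongr ?_ * _
        exact pow_le_pow_of_le_one hε.le (by linarith) (by simp)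
      _ = 100 * (ε * M) * α := by linear_combination -ε * hMα
      _ ≤ 100 * (ε * M) := mul_le_of_le_one_right (by positivity) hα1.le
    linarith
  have hfloor := Nat.floor_le hM0
  have hhalf : M ≤ 2 * ⌊M⌋₊ := by
    nlinarith [Nat.lt_floor_add_one M]
  refine ⟨⌊M⌋₊, by nlinarith, ?_, by nlinarith, by nlinarith⟩
  have : 10 ^ 6 * M * ε ≤ ε ^ 2 * n * ε := by nlinarith
  linarith [le_of_mul_le_mul_right this hε]

theorem exists_block_count {m : ℕ} (hε : 0 < ε) (hε1 : ε ≤ 1) (hm : 10 ^ 8 ≤ ε * m)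
    (hmn : 10 ^ 6 * m ≤ ε ^ 2 * n) :
    ∃ K ρ : ℕ, n = 2 * K * m + ρ ∧ ρ ≤ 2 * m ∧ 10 ^ 5 ≤ ε * (2 * K) ∧ 2 * K ≤ ε * n := by
  have hm0 : 0 < (m : ℝ) := pos_of_mul_pos_right (by linarith) hε.le
  have hmod : n % (2 * m) < 2 * m := Nat.mod_lt _ (by exact_mod_cast mul_pos two_pos hm0)
  have hdiv : n = 2 * (n / (2 * m)) * m + n % (2 * m) := by
    rw [mul_right_comm, Nat.div_add_mod]
  refine ⟨n / (2 * m), n % (2 * m), hdiv, hmod.le, ?_, ?_⟩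
  all_goals
    generalize n / (2 * m) = K at hdiv
    generalize n % (2 * m) = ρ at hdiv hmod
    have hn : (n : ℝ) = 2 * K * m + ρ := by exact_mod_cast hdiv
    have hρ : (ρ : ℝ) ≤ 2 * m := by exact_mod_cast hmod.le
  · have : 10 ^ 6 * m ≤ ε * (2 * K + 2) * m := calc
      10 ^ 6 * (m : ℝ) ≤ ε ^ 2 * (2 * K * m + 2 * m) := hmn.trans (by rw [hn]; gcongr)
      _ ≤ ε * (2 * K * m + 2 * m) := by gcongr; nlinarith
      _ = ε * (2 * K + 2) * m := by ring
    linarith [le_of_mul_le_mul_right this hm0]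
  · calc
      2 * (K : ℝ) ≤ 2 * K * (ε * m) := le_mul_of_one_le_right (by positivity) (by linarith)
      _ ≤ ε * n := by rw [hn]; nlinarith [(Nat.cast_nonneg ρ : (0 : ℝ) ≤ ρ)]

theorem exists_matching_count {K : ℕ} (hK0 : 0 < K) (hK : 2 * K ≤ ε * n) (hα : 8 * ε ≤ α) :
    ∃ D : ℕ, D ≤ (α - 8 * ε) * n / (2 * K) + 1 ∧ (α - 8 * ε) * n ≤ 2 * (K * D) ∧
      2 * (K * D) ≤ (α - 7 * ε) * n := by
  have hK' : (0 : ℝ) < 2 * K := by positivity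
  have hle := Nat.le_ceil ((α - 8 * ε) * n / (2 * K))
  have hlt := Nat.ceil_lt_add_one (a := (α - 8 * ε) * n / (2 * K))
    (div_nonneg (mul_nonneg (by linarith) n.cast_nonneg) hK'.le)
  refine ⟨_, hlt.le, ?_, ?_⟩
  · linarith [(div_le_iff₀ hK').1 hle]
  · linarith [(lt_div_iff₀ hK').1 (sub_lt_iff_lt_add.2 hlt)]

theorem exists_test_size {k m : ℕ} (hn : 2 ≤ n) (hk : k ≤ n) (hα0 : 0 < α) (hα1 : α < 1)
    (hlog : 10 ^ 11 * Real.log n ≤ ε ^ 5 * n) (hm : ε ^ 3 * n ≤ 200 * (α * m)) :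
    ∃ q : ℕ, 6 / α ≤ q ∧ q ≤ 7 / α ∧
      2 * ((n + (n + (n + 1) ^ q) : ℕ) * k) * Real.exp (-2 * (ε * m / 1024) ^ 2 / m) < 1 := by
  have hq : ⌈6 / α⌉₊ ≤ 7 / α := by
    have : 1 ≤ 1 / α := (one_le_div hα0).2 hα1.le
    linarith [Nat.ceil_lt_add_one (a := 6 / α) (by positivity), add_div 6 1 α]
  refine ⟨⌈6 / α⌉₊, Nat.le_ceil _, hq, ?_⟩
  generalize ⌈6 / α⌉₊ = q at hq
  have hlog0 := Real.log_natCast_nonneg n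
  have hexp : (2 * q + 6) * Real.log n ≤ 2 * (ε * m / 1024) ^ 2 / m := by
    refine le_of_mul_le_mul_right ?_ hα0
    calc
      (2 * q + 6) * Real.log n * α = (2 * (q * α) + 6 * α) * Real.log n := by ring
      _ ≤ (2 * 7 + 6 * 1) * Real.log n := by gcongr; exact (le_div_iff₀ hα0).1 hq
      _ ≤ 2 * ε ^ 2 * (α * m) / 1024 ^ 2 := by nlinarith [sq_nonneg ε]
      _ = 2 * (ε * m / 1024) ^ 2 / m * α := by field_simp
  rw [show -2 * (ε * m / 1024) ^ 2 / m = -(2 * (ε * m / 1024) ^ 2 / m) by ring, Real.exp_neg,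
    mul_inv_lt_iff₀ (Real.exp_pos _), one_mul]
  exact lt_exp_of_log_le hn hk hexp

theorem eventually_mul_log_pow_le (c : ℝ) (k : ℕ) :
    ∀ᶠ n : ℕ in atTop, c * Real.log n ^ k ≤ n := by
  have hlittle := ((Real.isLittleO_pow_log_id_atTop (n := k)).const_mul_left c).bound one_pos
  filter_upwards [tendsto_natCast_atTop_atTop.eventually hlittle] with n hn
  simpa using (le_abs_self _).trans hn

theorem log_le_of_one_le_mul_sqrt (hlog : 0 < Real.log n) (hε : 0 ≤ ε) (hα1 : α ≤ 1)
    (hn : 10 ^ 66 * Real.log n ^ 11 ≤ n) (h : 1 ≤ α * ε ^ 3 * √(n * Real.log n)) :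
    10 ^ 11 * Real.log n ≤ ε ^ 5 * n := by
  generalize Real.log n = L at *
  have hsqrt : 1 ≤ ε ^ 3 * √(n * L) :=
    h.trans (by rw [mul_assoc]; exact mul_le_of_le_one_left (by positivity) hα1)
  have hsq : 1 ≤ ε ^ 6 * (n * L) := calc
    1 ≤ (ε ^ 3 * √(n * L)) ^ 2 := one_le_pow₀ hsqrt
    _ = ε ^ 6 * (n * L) := by rw [mul_pow, Real.sq_sqrt (by positivity)]; ring
  -- Raising `hsq` to the fifth power trades `ε ^ 30` for `n ^ 5 * L ^ 5`.
  refine le_of_pow_le_pow_left₀ (n := 6) (by simp) (by positivity)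
    (le_of_mul_le_mul_right ?_ (pow_pos hlog 5))
  calc
    (10 ^ 11 * L) ^ 6 * L ^ 5 = 10 ^ 66 * L ^ 11 := by ring
    _ ≤ (n : ℝ) := hn
    _ ≤ (ε ^ 6 * (n * L)) ^ 5 * n := le_mul_of_one_le_left n.cast_nonneg (one_le_pow₀ hsq)
    _ = (ε ^ 5 * n) ^ 6 * L ^ 5 := by ring

theorem eventually_log_le {α ε : ℕ → ℝ} (hα : ∀ n, α n ≤ 1) (hε : ∀ n, 0 ≤ ε n)
    (h : Tendsto (fun n ↦ α n * ε n ^ 3 * √(n * Real.log n)) atTop atTop) :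
    ∀ᶠ n : ℕ in atTop, 10 ^ 11 * Real.log n ≤ ε n ^ 5 * n := by
  filter_upwards [eventually_mul_log_pow_le (10 ^ 66) 11, h.eventually_ge_atTop 1,
    eventually_gt_atTop 1] with n hn h hn1
  exact log_le_of_one_le_mul_sqrt (Real.log_pos (by exact_mod_cast hn1)) (hε n) (hα n) hn h

end Numerics

section Assembly

variable {n : ℕ} {α ε : ℝ}

theorem exists_path_systems {V : Type*} [Fintype V] {B : SimpleGraph V}
    (hV : Fintype.card V = n) (hn : 2 ≤ n) (hε : 0 < ε) (hα : 10 ^ 4 * ε ≤ α) (hα1 : α < 1)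
    (hlog : 10 ^ 11 * Real.log n ≤ ε ^ 5 * n)
    (hdeg : ∀ v, (α - 5 / 2 * ε) * n ≤ #{w | B.Adj v w})
    (hB : IsPairDense B (α - 5 / 2 * ε) (ε * n)) :
    ∃ (K D p : ℕ) (l : Fin K × Fin D → List V) (P : Fin K × Fin D → Finset (Sym2 V)),
      (α - 8 * ε) * n ≤ 2 * (K * D) ∧ 2 * (K * D) ≤ (α - 7 * ε) * n ∧
      25 * (p * (2 * (K * D))) ≤ ε ^ 3 * n ^ 2 ∧
      (∀ j, IsEnumeration (l j)) ∧ Pairwise (Function.onFun Disjoint P) ∧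
      (∀ j, ∀ e ∈ P j, e ∈ B.edgeSet) ∧ (∀ j, ∀ e ∈ P j, e ∈ cycleEdges (l j)) ∧
      ∀ j, (cycleEdges (l j)).countP (· ∉ P j) ≤ p := by
  obtain ⟨m, hεm, hmn, hm, hm'⟩ :=
    exists_block_size hε hα hα1 (le_pow_mul_of_log_le hn hlog)
  obtain ⟨K, ρ, hnK, hρ, hεK, hK⟩ := exists_block_count hε (by linarith) hεm hmn
  have hm0 : (0 : ℝ) < m := pos_of_mul_pos_right (by linarith) hε.le
  have hK0 : (0 : ℝ) < 2 * K := pos_of_mul_pos_right (by linarith) hε.le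
  have : NeZero (2 * K) := ⟨by rintro h; simp_all⟩
  have hKn : 2 * K ≤ n := by
    have : (2 * K : ℝ) ≤ n := hK.trans (mul_le_of_le_one_left n.cast_nonneg (by linarith))
    exact_mod_cast this
  obtain ⟨D, hD, hKD, hKD'⟩ :=
    exists_matching_count (α := α) (by exact_mod_cast (pos_of_mul_pos_right hK0 zero_le_two)) hK
      (by linarith)
  obtain ⟨q, hq, hq', hsum⟩ := exists_test_size hn hKn (by linarith) hα1 hlog hm'
  have hρ' : (ρ : ℝ) ≤ 2 * m := by exact_mod_cast hρ
  obtain ⟨ψ, π, hψ, hπB, hπ⟩ := exists_blocks hV hnK hε hα hα1 (by linarith)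
    (by push_cast; rw [div_le_iff₀ hK0]; nlinarith) (by exact_mod_cast hD) hq hq' hsum hdeg hB
  obtain ⟨l, P, hl, hP, hPB, hPl, hcost⟩ :=
    exists_isEnumeration_of_blocks (ρ := ρ) (by rw [hV, hnK, Fintype.card_fin]) hψ hπB hπ
  refine ⟨K, D, m + ρ + 2, l, P, hKD, hKD', ?_, hl, hP, hPB, hPl, by simpa using hcost⟩
  calc
    25 * (((m + ρ + 2 : ℕ) : ℝ) * (2 * (K * D))) ≤ 25 * (4 * m * (α * n)) := by
      have hp : ((m + ρ + 2 : ℕ) : ℝ) ≤ 4 * m := by push_cast; nlinarith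
      have hJ : 2 * (K * D) ≤ α * n := hKD'.trans (by gcongr; linarith)
      gcongr
    _ = 100 * (α * m) * n := by ring
    _ ≤ ε ^ 3 * n * n := by gcongr
    _ = ε ^ 3 * n ^ 2 := by ring

theorem isPairDense_of_isRegularGraph {G : SimpleGraph (Fin n)} (hG : IsRegularGraph G α ε) :
    IsPairDense G (α - ε) (ε * n) := fun S T hST hS hT ↦ by
  obtain h | h := (by positivity : (0 : ℝ) ≤ #S * #T).eq_or_lt
  · simp [← h]
  · rw [← le_div_iff₀ h]
    have := (abs_le.1 (hG.2 S T hST hS hT)).1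
    unfold Rel.interedges
    linarith

theorem exists_reserve_of_isRegularGraph {G : SimpleGraph (Fin n)} (hn : 2 ≤ n) (hε : 0 < ε)
    (hα : 10 ^ 4 * ε ≤ α) (hα1 : α < 1) (hlog : 10 ^ 11 * Real.log n ≤ ε ^ 5 * n)
    (hG : IsRegularGraph G α ε) :
    ∃ B ≤ G, ∃ H ≤ G, Disjoint B H ∧ (∀ v, (α - 5 / 2 * ε) * n ≤ #{w | B.Adj v w}) ∧
      IsPairDense B (α - 5 / 2 * ε) (ε * n) ∧ IsPairDense H (ε / 2) (ε * n) := by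
  have hα0 : 0 < α := by linarith
  have hp : ε / α ∈ Set.Icc (0 : ℝ) 1 := ⟨by positivity, (div_le_one hα0).2 (by linarith)⟩
  have hbig : 150 ≤ ε ^ 4 * n := by
    have hpow : ε ^ 5 * n ≤ ε ^ 4 * n := by
      gcongr ?_ * _
      exact pow_le_pow_of_le_one hε.le (by linarith) (by simp)
    linarith [le_pow_mul_of_log_le hn hlog]
  have hεα : ε / α * ε ≤ ε / 10 ^ 4 := by
    rw [div_mul_eq_mul_div, div_le_div_iff₀ hα0 (by positivity)]
    nlinarith
  have hεε : 0 ≤ ε / α * ε := by positivity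
  have hεα' : ε / α * α = ε := div_mul_cancel₀ ε hα0.ne'
  obtain ⟨B, hBG, H, hHG, hBH, hBdeg, hB, hH⟩ := exists_reserve G (Fintype.card_fin n) hε
    (by linarith) hbig ⟨_, hp⟩ hG.1 (isPairDense_of_isRegularGraph hG)
  refine ⟨B, hBG, H, hHG, hBH, fun v ↦ le_trans ?_ (hBdeg v), hB.mono ?_, hH.mono ?_⟩
  · refine mul_le_mul_of_nonneg_right ?_ n.cast_nonneg
    linarith
  · linarith
  · linarith

theorem exists_finset_isHamCycleEdgeSet {J : Type*} [Fintype J] (hn : 3 ≤ n)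
    {G : SimpleGraph (Fin n)} {C : J → List (Fin n)} (hC : ∀ j, IsEnumeration (C j))
    (hCG : ∀ j, ∀ e ∈ cycleEdges (C j), e ∈ G.edgeSet)
    (hdisj : Pairwise (Function.onFun Disjoint fun j ↦ (cycleEdges (C j)).toFinset)) :
    ∃ 𝒞 : Finset (Finset (Sym2 (Fin n))), #𝒞 = Fintype.card J ∧
      (∀ s ∈ 𝒞, IsHamCycleEdgeSet G s) ∧
      (𝒞 : Set (Finset (Sym2 (Fin n)))).Pairwise Disjoint := by
  have hne j : (cycleEdges (C j)).toFinset ≠ ∅ := by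
    have : C j ≠ [] := List.ne_nil_of_mem ((hC j).mem ⟨0, by omega⟩)
    simp [cycleEdges_of_ne_nil this]
  have hinj : Function.Injective fun j ↦ (cycleEdges (C j)).toFinset := fun i j hij ↦ by
    by_contra h
    have := hdisj h
    simp only [Function.onFun, hij, disjoint_self] at this
    exact hne j this
  refine ⟨univ.map ⟨_, hinj⟩, by simp, fun s hs ↦ ?_, ?_⟩
  · obtain ⟨j, -, rfl⟩ := mem_map.1 hs
    obtain ⟨a, w, hw, hedges⟩ := (hC j).exists_isHamiltonianCycle (by simpa) G (hCG j)
    exact ⟨a, w, by convert hw, by ext e; simpa using Finset.ext_iff.1 hedges e⟩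
  · rw [coe_map, coe_univ, Set.image_univ]
    exact hdisj.range_pairwise

theorem card_lt_card_interedges_of_isPairDense {V : Type*} {H : SimpleGraph V} {c : ℕ}
    (hε : 0 < ε) (hn : 0 < n) (hH : IsPairDense H (ε / 2) (ε * n))
    (hc : c ≤ ε ^ 3 * n ^ 2) {S T : Finset V} (hST : Disjoint S T) (hS : ⌈2 * ε * n⌉₊ ≤ #S)
    (hT : ⌈2 * ε * n⌉₊ ≤ #T) : c < #(Rel.interedges H.Adj S T) := by
  have : (0 : ℝ) < n := by exact_mod_cast hn
  have hS' := Nat.ceil_le.1 hS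
  have hT' := Nat.ceil_le.1 hT
  have hεn : 0 < ε * n := by positivity
  have hdense := hH hST (by linarith) (by linarith)
  have : (c : ℝ) < #(Rel.interedges H.Adj S T) := calc
    (c : ℝ) < ε / 2 * ((2 * ε * n) * (2 * ε * n)) := by
      have : 0 < ε ^ 3 * (n : ℝ) ^ 2 := by positivity
      linarith
    _ ≤ ε / 2 * (#S * #T) := by gcongr
    _ ≤ #(Rel.interedges H.Adj S T) := hdense
  exact_mod_cast this

theorem exists_pairwise_disjoint_cycleEdges_of_isRegularGraph {G : SimpleGraph (Fin n)}
    (hn : 2 ≤ n) (hε : 0 < ε) (hα : 10 ^ 4 * ε ≤ α) (hα1 : α < 1)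
    (hlog : 10 ^ 11 * Real.log n ≤ ε ^ 5 * n) (hG : IsRegularGraph G α ε) :
    ∃ (K D : ℕ) (C : Fin K × Fin D → List (Fin n)), (α - 8 * ε) * n ≤ 2 * (K * D) ∧
      (∀ j, IsEnumeration (C j)) ∧ (∀ j, ∀ e ∈ cycleEdges (C j), e ∈ G.edgeSet) ∧
      Pairwise (Function.onFun Disjoint fun j ↦ (cycleEdges (C j)).toFinset) := by
  obtain ⟨B, hBG, H, hHG, hBH, hdeg, hB, hH⟩ :=
    exists_reserve_of_isRegularGraph hn hε hα hα1 hlog hG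
  obtain ⟨K, D, p, l, P, hmany, hfew, hp, hl, hP, hPB, hPl, hcost⟩ :=
    exists_path_systems (Fintype.card_fin n) hn hε hα hα1 hlog hdeg hB
  have hcard : Fintype.card (Fin K × Fin D) = K * D := by simp
  have hGdeg (v) : 2 * ⌈2 * ε * n⌉₊ + 2 * Fintype.card (Fin K × Fin D) ≤ #{w | G.Adj v w} := by
    have hceil := Nat.ceil_lt_add_one (a := 2 * ε * n) (by positivity)
    have hεn := le_mul_of_log_le hn hε (by linarith) hlog
    have := hG.1 v
    rw [hcard]
    rify
    linarith
  have hreserve : (4 * p * Fintype.card (Fin K × Fin D) : ℕ) ≤ ε ^ 3 * n ^ 2 := by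
    have : (0 : ℝ) ≤ p * (2 * (K * D)) := by positivity
    rw [hcard]
    push_cast
    linarith
  obtain ⟨C, hC, hCG, hdisj⟩ := exists_pairwise_disjoint_cycleEdges hHG hGdeg
    (fun S T ↦ card_lt_card_interedges_of_isPairDense hε (by omega) hH hreserve) hP
    (fun j e he ↦ SimpleGraph.edgeSet_mono hBG (hPB j e he))
    (fun j e he ↦ Set.disjoint_left.1 (SimpleGraph.disjoint_edgeSet.2 hBH) (hPB j e he))
    hl hPl hcost
  exact ⟨K, D, C, hmany, hC, hCG, by convert hdisj⟩

end Assembly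

end HamiltonPacking

open HamiltonPacking

theorem stmt_0_general {n : ℕ} {α ε : ℝ} (hn : 2 ≤ n) (hε : 0 < ε) (hα : 10 ^ 4 * ε ≤ α)
    (hα1 : α < 1) (hlog : 10 ^ 11 * Real.log n ≤ ε ^ 5 * n) {G : SimpleGraph (Fin n)}
    (hG : IsRegularGraph G α ε) :
    ∃ 𝒞 : Finset (Finset (Sym2 (Fin n))),
      (α / 2 - 4 * ε) * n ≤ #𝒞 ∧ (∀ s ∈ 𝒞, IsHamCycleEdgeSet G s) ∧
      (𝒞 : Set (Finset (Sym2 (Fin n)))).Pairwise Disjoint := by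
  have hn3 : 3 ≤ n := by
    have := (le_mul_of_log_le hn hε (by linarith) hlog).trans
      (mul_le_of_le_one_left n.cast_nonneg (by linarith))
    exact_mod_cast (by linarith : (3 : ℝ) ≤ n)
  obtain ⟨K, D, C, hcount, hC, hCG, hdisj⟩ :=
    exists_pairwise_disjoint_cycleEdges_of_isRegularGraph hn hε hα hα1 hlog hG
  obtain ⟨𝒞, hcard, h𝒞⟩ := exists_finset_isHamCycleEdgeSet hn3 hC hCG hdisj
  refine ⟨𝒞, ?_, h𝒞⟩
  rw [hcard, Fintype.card_prod, Fintype.card_fin, Fintype.card_fin]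
  push_cast
  linarith

open scoped Classical in
/-- if `α_n, ε_n ∈ (0,1)`, `α_n/ε_n → ∞`, `α_n ε_n³ (n log n)^{1/2} → ∞` and
`G_n` is an `(α_n, ε_n)`-regular graph on `n` vertices, then for all large `n` the graph
`G_n` contains at least `(α_n/2 - 4ε_n)n` pairwise edge-disjoint Hamilton cycles. -/
theorem stmt_0 (α ε : ℕ → ℝ)
    (hα : ∀ n, α n ∈ Set.Ioo (0 : ℝ) 1) (hε : ∀ n, ε n ∈ Set.Ioo (0 : ℝ) 1)
    (h1 : Tendsto (fun n => α n / ε n) atTop atTop)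
    (h2 : Tendsto (fun n => α n * (ε n) ^ 3 * Real.sqrt ((n : ℝ) * Real.log n)) atTop atTop)
    (G : ∀ n : ℕ, SimpleGraph (Fin n))
    (hreg : ∀ n, IsRegularGraph (G n) (α n) (ε n)) :
    ∀ᶠ n in atTop, ∃ 𝒞 : Finset (Finset (Sym2 (Fin n))),
      (α n / 2 - 4 * ε n) * (n : ℝ) ≤ (𝒞.card : ℝ) ∧
      (∀ s ∈ 𝒞, IsHamCycleEdgeSet (G n) s) ∧
      (𝒞 : Set (Finset (Sym2 (Fin n)))).Pairwise Disjoint := by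
  filter_upwards [h1.eventually_ge_atTop (10 ^ 4),
    eventually_log_le (fun n ↦ (hα n).2.le) (fun n ↦ (hε n).1.le) h2, eventually_ge_atTop 2]
    with n hαε hlog hn
  exact stmt_0_general hn (hε n).1 ((le_div_iff₀ (hε n).1).1 hαε) (hα n).2 hlog (hreg n)
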